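/- arXiv:2512.12379 — 10 statements merged into one kernel-verified Lean document; each statement's English description precedes it below -/
import Mathlib

section
/- For every a ∈ (0, 1/2) there exists a constant C > 0 (depending only on a) with the following property: for all natural numbers n ≥ 1 and s with a ≤ s/n ≤ 1−a, and for all real numbers ε, y with 0 < ε ≤ a/2 and |y| ≤ ε, one has |s·log(1 + n y/s) + (n−s)·log(1 − n y/(n−s)) + n³y²/(2 s (n−s))| ≤ C · ε · n³y²/(s(n−s)). -/
open Real

/-!
Expand both logarithms to second order at `u = n * y`. The linear terms `u` and `-u` cancel, and
since `1 / s + 1 / (n - s) = n / (s * (n - s))` the quadratic terms add up to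
`-n ^ 3 * y ^ 2 / (2 * s * (n - s))`. Both arguments `u / s` and `u / (n - s)` are at most `ε / a`
in absolute value, hence bounded away from `1` when `ε ≤ r < a`, so each cubic remainder is `O(ε)`
times the corresponding quadratic term.
-/

theorem abs_log_one_sub_add_add_sq_div_two_le {x : ℝ} (hx : |x| < 1) :
    |log (1 - x) + x + x ^ 2 / 2| ≤ |x| ^ 3 / (1 - |x|) := by
  have taylor_sum : ∑ i ∈ Finset.range 2, x ^ (i + 1) / ((i : ℝ) + 1) = x + x ^ 2 / 2 := by
    norm_num [Finset.sum_range_succ]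
  rw [add_assoc, add_comm, ← taylor_sum]
  exact abs_log_sub_add_sum_range_le hx 2

theorem abs_mul_log_one_sub_div_add_le {q t u : ℝ} (ht : 0 < t) (hq : q < 1) (hu : |u| ≤ q * t) :
    |t * log (1 - u / t) + u + u ^ 2 / (2 * t)| ≤ q / (1 - q) * (u ^ 2 / t) := by
  have ratio_le : |u / t| ≤ q := by rwa [abs_div, abs_of_pos ht, div_le_iff₀ ht]
  have q_nonneg : 0 ≤ q := (abs_nonneg _).trans ratio_le
  have one_sub_pos : 0 < 1 - q := sub_pos.mpr hq
  calc |t * log (1 - u / t) + u + u ^ 2 / (2 * t)|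
      = |t * (log (1 - u / t) + u / t + (u / t) ^ 2 / 2)| := by congr 1; field_simp
    _ = t * |log (1 - u / t) + u / t + (u / t) ^ 2 / 2| := by rw [abs_mul, abs_of_pos ht]
    _ ≤ t * (|u / t| ^ 3 / (1 - |u / t|)) := by
      gcongr
      exact abs_log_one_sub_add_add_sq_div_two_le (ratio_le.trans_lt hq)
    _ = t * (|u / t| / (1 - |u / t|) * (u / t) ^ 2) := by rw [← sq_abs (u / t)]; ring
    _ ≤ t * (q / (1 - q) * (u / t) ^ 2) := by gcongr
    _ = q / (1 - q) * (u ^ 2 / t) := by field_simp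

theorem abs_mul_log_add_mul_log_add_le {s m q u : ℝ} (hs : 0 < s) (hm : 0 < m) (hq : q < 1)
    (hus : |u| ≤ q * s) (hum : |u| ≤ q * m) :
    |s * log (1 + u / s) + m * log (1 - u / m) + (s + m) * u ^ 2 / (2 * s * m)| ≤
      q / (1 - q) * ((s + m) * u ^ 2 / (s * m)) := by
  have bound_s := abs_mul_log_one_sub_div_add_le hs hq (u := -u) (by rwa [abs_neg])
  have bound_m := abs_mul_log_one_sub_div_add_le hm hq hum
  rw [neg_div, sub_neg_eq_add, neg_sq] at bound_s
  calc |s * log (1 + u / s) + m * log (1 - u / m) + (s + m) * u ^ 2 / (2 * s * m)|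
      = |(s * log (1 + u / s) + -u + u ^ 2 / (2 * s)) +
          (m * log (1 - u / m) + u + u ^ 2 / (2 * m))| := by
        congr 1; field_simp; ring
    _ ≤ q / (1 - q) * (u ^ 2 / s) + q / (1 - q) * (u ^ 2 / m) :=
      (abs_add_le _ _).trans (add_le_add bound_s bound_m)
    _ = q / (1 - q) * ((s + m) * u ^ 2 / (s * m)) := by field_simp; ring

theorem bernstein_taylor_lemma_general {a r n s ε y : ℝ} (hr : r < a) (hn : 0 < n)
    (has : a ≤ s / n) (hsa : s / n ≤ 1 - a) (hε : ε ≤ r) (hy : |y| ≤ ε) :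
    |s * log (1 + n * y / s) + (n - s) * log (1 - n * y / (n - s)) +
        n ^ 3 * y ^ 2 / (2 * s * (n - s))| ≤
      (a - r)⁻¹ * ε * (n ^ 3 * y ^ 2 / (s * (n - s))) := by
  have ε_nonneg : 0 ≤ ε := (abs_nonneg y).trans hy
  have a_pos : 0 < a := by linarith
  have le_s : a * n ≤ s := (le_div_iff₀ hn).mp has
  have le_sub : a * n ≤ n - s := by linarith [(div_le_iff₀ hn).mp hsa]
  have s_pos : 0 < s := (mul_pos a_pos hn).trans_le le_s
  have n_sub_pos : 0 < n - s := (mul_pos a_pos hn).trans_le le_sub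
  have abs_mul_le {t : ℝ} (ht : a * n ≤ t) : |n * y| ≤ ε / a * t :=
    calc |n * y| = n * |y| := by rw [abs_mul, abs_of_pos hn]
      _ ≤ n * ε := by gcongr
      _ = ε / a * (a * n) := by field_simp
      _ ≤ ε / a * t := by gcongr
  have ratio_lt_one : ε / a < 1 := (div_lt_one a_pos).mpr (hε.trans_lt hr)
  have coeff_le : ε / a / (1 - ε / a) ≤ (a - r)⁻¹ * ε :=
    calc ε / a / (1 - ε / a) = (a - ε)⁻¹ * ε := by
          rw [one_sub_div a_pos.ne', div_div_div_cancel_right₀ a_pos.ne', div_eq_inv_mul]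
      _ ≤ (a - r)⁻¹ * ε := by gcongr
  have expansion := abs_mul_log_add_mul_log_add_le s_pos n_sub_pos ratio_lt_one
    (abs_mul_le le_s) (abs_mul_le le_sub)
  have numerator_eq : (s + (n - s)) * (n * y) ^ 2 = n ^ 3 * y ^ 2 := by ring
  rw [numerator_eq] at expansion
  exact expansion.trans (by gcongr)

/-- Bernstein's Taylor-expansion lemma: the logarithm of the rescaled binomial
likelihood `(1 + ny/s)^s (1 − ny/(n−s))^{n−s}` equals `−n³y²/(2s(n−s))·(1 + O(ε))`
uniformly for `|y| ≤ ε`, as long as `s/n` stays in `[a, 1−a]`. -/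
theorem bernstein_taylor_lemma (a : ℝ) (ha : 0 < a) (ha' : a < 1/2) :
    ∃ C > 0, ∀ (n s : ℕ), 1 ≤ n →
      a ≤ (s : ℝ) / n → (s : ℝ) / n ≤ 1 - a →
      ∀ ε y : ℝ, 0 < ε → ε ≤ a / 2 → |y| ≤ ε →
      |(s : ℝ) * Real.log (1 + (n : ℝ) * y / s) +
        ((n : ℝ) - s) * Real.log (1 - (n : ℝ) * y / ((n : ℝ) - s)) +
        (n : ℝ) ^ 3 * y ^ 2 / (2 * (s : ℝ) * ((n : ℝ) - s))| ≤
      C * ε * ((n : ℝ) ^ 3 * y ^ 2 / ((s : ℝ) * ((n : ℝ) - s))) :=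
  ⟨(a - a / 2)⁻¹, inv_pos.mpr (sub_pos.mpr (half_lt_self ha)),
    fun _ _ hn has hsa _ _ _ hε hy ↦ bernstein_taylor_lemma_general (half_lt_self ha)
      (Nat.cast_pos.mpr hn) has hsa hε hy⟩
end

section
/- Let n, s be natural numbers with 0 < s < n, let θ_n := s/n, let f : [0,1] → [0, M] be measurable, and let 0 < ε < min(θ_n, 1−θ_n). Then the tail integral ∫ over {y ∈ [−θ_n, 1−θ_n] : |y| ≥ ε} of f(θ_n + y) · r_n(y) dy is at most M · max(r_n(−ε), r_n(ε)), where r_n(y) := (1 + n y/s)^s (1 − n y/(n−s))^{n−s}. -/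
/-!
Put `u = n y`, `p = s` and `q = n - s`, so that the likelihood becomes `(1 + u/p)^p (1 - u/q)^q`.
If `v` lies between `0` and `u`, then
`1 + u/p ≤ (1 + v/p) (1 + (u - v)/p) ≤ (1 + v/p) e^((u - v)/p)`,
hence `(1 + u/p)^p ≤ (1 + v/p)^p e^(u - v)`. The same bound for `q`, `-u`, `-v` carries the factor
`e^(v - u)`, so in the product the exponentials cancel and the likelihood does not increase as its
argument moves away from `0`. On the tail it is therefore at most its larger boundary value, and
the tail lies in an interval of length one.
-/

open MeasureTheory

section

open Set

/-- The binomial likelihood with `p` successes and `q` failures, divided by its maximal value, as a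
function of the deviation `u` of the expected number of successes from `p`. Bernstein's `r_n(y)` is
`rescaledLikelihood s (n - s) (n * y)`. The powers are real powers, so that `p` and `q` need not be
integers; outside `[-p, q]` one of the bases is negative and its real power is a junk value. -/
noncomputable def rescaledLikelihood (p q u : ℝ) : ℝ :=
  (1 + u / p) ^ p * (1 - u / q) ^ q

variable {p q u v δ : ℝ}

lemma rescaledLikelihood_natCast {n s : ℕ} (hsn : s ≤ n) (u : ℝ) :
    rescaledLikelihood s (n - s) u = (1 + u / s) ^ s * (1 - u / ((n : ℝ) - s)) ^ (n - s) := by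
  rw [rescaledLikelihood, ← Nat.cast_sub hsn, Real.rpow_natCast, Real.rpow_natCast]

lemma measurable_rescaledLikelihood (p q : ℝ) : Measurable (rescaledLikelihood p q) := by
  unfold rescaledLikelihood
  fun_prop

lemma one_add_div_nonneg (hp : 0 < p) (hu : -p ≤ u) : 0 ≤ 1 + u / p := by
  have : -1 ≤ u / p := by rwa [le_div_iff₀ hp, neg_one_mul]
  linarith

lemma rescaledLikelihood_nonneg (hp : 0 < p) (hq : 0 < q) (hu : u ∈ Icc (-p) q) :
    0 ≤ rescaledLikelihood p q u := by
  have hfail : 0 ≤ 1 - u / q := sub_nonneg.2 ((div_le_one hq).2 hu.2)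
  exact mul_nonneg (Real.rpow_nonneg (one_add_div_nonneg hp hu.1) p) (Real.rpow_nonneg hfail q)

lemma one_add_div_rpow_le_mul_exp (hp : 0 < p) (hu : -p ≤ u) (hv : v ∈ uIcc 0 u) :
    (1 + u / p) ^ p ≤ (1 + v / p) ^ p * Real.exp (u - v) := by
  have hvp : -p ≤ v := (le_inf (neg_nonpos.2 hp.le) hu).trans hv.1
  have hv_base : 0 ≤ 1 + v / p := one_add_div_nonneg hp hvp
  have same_sign : 0 ≤ v * (u - v) := by
    rcases mem_uIcc.1 hv with ⟨h0v, hvu⟩ | ⟨huv, hv0⟩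
    · exact mul_nonneg h0v (sub_nonneg.2 hvu)
    · exact mul_nonneg_of_nonpos_of_nonpos hv0 (sub_nonpos.2 huv)
  have base_le : 1 + u / p ≤ (1 + v / p) * Real.exp ((u - v) / p) := calc
    1 + u / p ≤ 1 + u / p + v * (u - v) / p ^ 2 := le_add_of_nonneg_right (by positivity)
    _ = (1 + v / p) * ((u - v) / p + 1) := by field_simp; ring
    _ ≤ (1 + v / p) * Real.exp ((u - v) / p) := by gcongr; exact Real.add_one_le_exp _
  calc (1 + u / p) ^ p ≤ ((1 + v / p) * Real.exp ((u - v) / p)) ^ p :=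
        Real.rpow_le_rpow (one_add_div_nonneg hp hu) base_le hp.le
    _ = (1 + v / p) ^ p * Real.exp (u - v) := by
        rw [Real.mul_rpow hv_base (Real.exp_nonneg _), ← Real.exp_mul, div_mul_cancel₀ _ hp.ne']

lemma rescaledLikelihood_le_of_mem_uIcc (hp : 0 < p) (hq : 0 < q) (hu : u ∈ Icc (-p) q)
    (hv : v ∈ uIcc 0 u) : rescaledLikelihood p q u ≤ rescaledLikelihood p q v := by
  have hv_neg : -v ∈ uIcc 0 (-u) := by
    rw [mem_uIcc] at hv ⊢
    grind
  have success_le := one_add_div_rpow_le_mul_exp hp hu.1 hv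
  have failure_le := one_add_div_rpow_le_mul_exp hq (neg_le_neg hu.2) hv_neg
  have failure_nonneg := one_add_div_nonneg hq (neg_le_neg hu.2)
  have success_nonneg := one_add_div_nonneg hp hu.1
  calc rescaledLikelihood p q u = (1 + u / p) ^ p * (1 + -u / q) ^ q := by
        rw [rescaledLikelihood, neg_div, ← sub_eq_add_neg]
    _ ≤ ((1 + v / p) ^ p * Real.exp (u - v)) * ((1 + -v / q) ^ q * Real.exp (-u - -v)) :=
        mul_le_mul success_le failure_le (by positivity) (le_trans (by positivity) success_le)
    _ = (1 + v / p) ^ p * (1 + -v / q) ^ q * (Real.exp (u - v) * Real.exp (-u - -v)) := by ring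
    _ = (1 + v / p) ^ p * (1 + -v / q) ^ q := by
        rw [← Real.exp_add, show u - v + (-u - -v) = 0 by ring, Real.exp_zero, mul_one]
    _ = rescaledLikelihood p q v := by rw [rescaledLikelihood, neg_div, ← sub_eq_add_neg]

lemma monotoneOn_rescaledLikelihood (hp : 0 < p) (hq : 0 < q) :
    MonotoneOn (rescaledLikelihood p q) (Icc (-p) 0) := fun _ hu _ hv huv ↦
  rescaledLikelihood_le_of_mem_uIcc hp hq ⟨hu.1, hu.2.trans hq.le⟩ (mem_uIcc.2 (.inr ⟨huv, hv.2⟩))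

lemma antitoneOn_rescaledLikelihood (hp : 0 < p) (hq : 0 < q) :
    AntitoneOn (rescaledLikelihood p q) (Icc 0 q) := fun _ hv _ hu hvu ↦
  rescaledLikelihood_le_of_mem_uIcc hp hq ⟨(neg_nonpos.2 hp.le).trans hu.1, hu.2⟩
    (mem_uIcc.2 (.inl ⟨hv.1, hvu⟩))

lemma rescaledLikelihood_le_max_of_le_abs (hp : 0 < p) (hq : 0 < q) (hδ : 0 ≤ δ)
    (hu : u ∈ Icc (-p) q) (hδu : δ ≤ |u|) :
    rescaledLikelihood p q u ≤ max (rescaledLikelihood p q (-δ)) (rescaledLikelihood p q δ) := by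
  rcases le_abs.1 hδu with right | left
  · exact le_max_of_le_right <| antitoneOn_rescaledLikelihood hp hq
      ⟨hδ, right.trans hu.2⟩ ⟨hδ.trans right, hu.2⟩ right
  · have left' : u ≤ -δ := le_neg_of_le_neg left
    exact le_max_of_le_left <| monotoneOn_rescaledLikelihood hp hq
      ⟨hu.1, left'.trans (neg_nonpos.2 hδ)⟩ ⟨hu.1.trans left', neg_nonpos.2 hδ⟩ left'

lemma mul_mem_Icc_neg_sub {n s y : ℝ} (hn : 0 < n) (hy : y ∈ Icc (-(s / n)) (1 - s / n)) :
    n * y ∈ Icc (-s) (n - s) := by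
  have lower := mul_le_mul_of_nonneg_left hy.1 hn.le
  have upper := mul_le_mul_of_nonneg_left hy.2 hn.le
  rw [mul_neg, mul_div_cancel₀ s hn.ne'] at lower
  rw [mul_sub, mul_one, mul_div_cancel₀ s hn.ne'] at upper
  exact ⟨lower, upper⟩

lemma rescaledLikelihood_mul_mem_Icc {n s y ε : ℝ} (hs : 0 < s) (hsn : s < n) (hε : 0 ≤ ε)
    (hy : y ∈ Icc (-(s / n)) (1 - s / n)) (hεy : ε ≤ |y|) :
    rescaledLikelihood s (n - s) (n * y) ∈ Icc 0
      (max (rescaledLikelihood s (n - s) (n * -ε)) (rescaledLikelihood s (n - s) (n * ε))) := by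
  have hn : 0 < n := hs.trans hsn
  have hny := mul_mem_Icc_neg_sub hn hy
  refine ⟨rescaledLikelihood_nonneg hs (sub_pos.2 hsn) hny, ?_⟩
  rw [mul_neg]
  refine rescaledLikelihood_le_max_of_le_abs hs (sub_pos.2 hsn) (by positivity) hny ?_
  rw [abs_mul, abs_of_pos hn]
  gcongr

lemma max_rescaledLikelihood_mul_nonneg {n s ε : ℝ} (hs : 0 < s) (hsn : s < n) (hε0 : 0 ≤ ε)
    (hε : ε ≤ max (s / n) (1 - s / n)) :
    0 ≤ max (rescaledLikelihood s (n - s) (n * -ε)) (rescaledLikelihood s (n - s) (n * ε)) := by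
  have hθ0 : 0 < s / n := div_pos hs (hs.trans hsn)
  have hθ1 : s / n < 1 := (div_lt_one (hs.trans hsn)).2 hsn
  rcases le_max_iff.1 hε with left | right
  · exact le_max_of_le_left
      (rescaledLikelihood_mul_mem_Icc hs hsn hε0 ⟨by linarith, by linarith⟩
        ((le_abs_self ε).trans (abs_neg ε).ge)).1
  · exact le_max_of_le_right
      (rescaledLikelihood_mul_mem_Icc hs hsn hε0 ⟨by linarith, right⟩ (le_abs_self ε)).1

lemma aestronglyMeasurable_comp_add_left_restrict_Icc {E : Type*} [TopologicalSpace E] {f : ℝ → E}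
    {b c : ℝ} (hf : AEStronglyMeasurable f (volume.restrict (Icc b c))) (a : ℝ) :
    AEStronglyMeasurable (fun y ↦ f (a + y)) (volume.restrict (Icc (b - a) (c - a))) := by
  rw [← preimage_const_add_Icc]
  exact hf.comp_measurePreserving
    ((measurePreserving_add_left volume a).restrict_preimage measurableSet_Icc)

lemma norm_setIntegral_le_of_measure_le_one {X E : Type*} [MeasurableSpace X] {μ : Measure X}
    [NormedAddCommGroup E] [NormedSpace ℝ E] {g : X → E} {A : Set X} {C : ℝ} (hA : μ A ≤ 1)
    (hC : 0 ≤ C) (hg : ∀ x ∈ A, ‖g x‖ ≤ C) : ‖∫ x in A, g x ∂μ‖ ≤ C := calc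
  ‖∫ x in A, g x ∂μ‖ ≤ C * μ.real A :=
    norm_setIntegral_le_of_norm_le_const (hA.trans_lt ENNReal.one_lt_top) hg
  _ ≤ C := mul_le_of_le_one_right hC
    (ENNReal.toReal_le_of_le_ofReal zero_le_one (by simpa using hA))

theorem bernstein_tail_estimate_general {E : Type*} [NormedAddCommGroup E] [NormedSpace ℝ E]
    {n s : ℝ} (hs : 0 < s) (hsn : s < n) {f : ℝ → E} {M : ℝ}
    (hf_meas : AEStronglyMeasurable f (volume.restrict (Icc 0 1)))
    (hf : ∀ x ∈ Icc (0 : ℝ) 1, ‖f x‖ ≤ M)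
    {ε : ℝ} (hε0 : 0 ≤ ε) (hε : ε ≤ max (s / n) (1 - s / n)) :
    IntegrableOn (fun y ↦ rescaledLikelihood s (n - s) (n * y) • f (s / n + y))
        {y : ℝ | y ∈ Icc (-(s / n)) (1 - s / n) ∧ ε ≤ |y|} ∧
      ‖∫ y in {y : ℝ | y ∈ Icc (-(s / n)) (1 - s / n) ∧ ε ≤ |y|},
          rescaledLikelihood s (n - s) (n * y) • f (s / n + y)‖ ≤
        M * max (rescaledLikelihood s (n - s) (n * -ε)) (rescaledLikelihood s (n - s) (n * ε)) := by
  set tail := {y : ℝ | y ∈ Icc (-(s / n)) (1 - s / n) ∧ ε ≤ |y|}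
  set B := max (rescaledLikelihood s (n - s) (n * -ε)) (rescaledLikelihood s (n - s) (n * ε))
  have tail_subset : tail ⊆ Icc (-(s / n)) (1 - s / n) := fun y hy ↦ hy.1
  have tail_measurable : MeasurableSet tail :=
    measurableSet_Icc.inter (measurableSet_le measurable_const continuous_abs.measurable)
  have volume_tail_le : volume tail ≤ 1 := (measure_mono tail_subset).trans (by simp)
  have M_nonneg : 0 ≤ M := (norm_nonneg _).trans (hf 0 (left_mem_Icc.2 zero_le_one))
  have B_nonneg : 0 ≤ B := max_rescaledLikelihood_mul_nonneg hs hsn hε0 hε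
  have integrand_le : ∀ y ∈ tail,
      ‖rescaledLikelihood s (n - s) (n * y) • f (s / n + y)‖ ≤ M * B := by
    rintro y ⟨hy, hεy⟩
    obtain ⟨likelihood_nonneg, likelihood_le⟩ := rescaledLikelihood_mul_mem_Icc hs hsn hε0 hy hεy
    rw [norm_smul, Real.norm_of_nonneg likelihood_nonneg, mul_comm M]
    exact mul_le_mul likelihood_le (hf _ (add_mem_Icc_iff_right.2 (by simpa using hy)))
      (norm_nonneg _) B_nonneg
  have integrand_measurable : AEStronglyMeasurable
      (fun y ↦ rescaledLikelihood s (n - s) (n * y) • f (s / n + y)) (volume.restrict tail) :=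
    ((measurable_rescaledLikelihood s (n - s)).comp
      (measurable_const_mul n)).aestronglyMeasurable.smul
      ((aestronglyMeasurable_comp_add_left_restrict_Icc hf_meas (s / n)).mono_set
        (by simpa using tail_subset))
  exact ⟨.of_bound (volume_tail_le.trans_lt ENNReal.one_lt_top) integrand_measurable (M * B)
      (ae_restrict_of_forall_mem tail_measurable integrand_le),
    norm_setIntegral_le_of_measure_le_one volume_tail_le (by positivity) integrand_le⟩

end

/-- Bernstein's estimate of the remainder term `R`: outside the interval
`(−ε, ε)` around `0` (i.e. outside `(θ_n − ε, θ_n + ε)` around the maximum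
likelihood estimate `θ_n = s/n`), the integral of the bounded prior times the
likelihood is controlled by the boundary values of the rescaled likelihood
`r_n(y) = (1 + ny/s)^s (1 − ny/(n−s))^{n−s}`. -/
theorem bernstein_tail_estimate (n s : ℕ) (h1 : 0 < s) (h2 : s < n)
    (f : ℝ → ℝ) (M : ℝ) (hf_meas : Measurable f)
    (hf : ∀ x ∈ Set.Icc (0:ℝ) 1, f x ∈ Set.Icc 0 M)
    (ε : ℝ) (hε0 : 0 < ε) (hε : ε < min ((s : ℝ) / n) (1 - (s : ℝ) / n)) :
    (∫ y in {y : ℝ | y ∈ Set.Icc (-((s : ℝ) / n)) (1 - (s : ℝ) / n) ∧ ε ≤ |y|},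
        f ((s : ℝ) / n + y) *
          ((1 + (n : ℝ) * y / s) ^ s * (1 - (n : ℝ) * y / ((n : ℝ) - s)) ^ (n - s))) ≤
    M * max
        ((1 + (n : ℝ) * (-ε) / s) ^ s * (1 - (n : ℝ) * (-ε) / ((n : ℝ) - s)) ^ (n - s))
        ((1 + (n : ℝ) * ε / s) ^ s * (1 - (n : ℝ) * ε / ((n : ℝ) - s)) ^ (n - s)) := by
  have f_norm_le : ∀ x ∈ Set.Icc (0 : ℝ) 1, ‖f x‖ ≤ M := fun x hx ↦
    (Real.norm_of_nonneg (hf x hx).1).trans_le (hf x hx).2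
  have tail_bound := (bernstein_tail_estimate_general (Nat.cast_pos.2 h1) (Nat.cast_lt.2 h2)
    hf_meas.aestronglyMeasurable f_norm_le hε0.le (hε.le.trans min_le_max)).2
  simp only [rescaledLikelihood_natCast h2.le, smul_eq_mul, mul_comm _ (f _)] at tail_bound
  exact (le_abs_self _).trans tail_bound
end

section
/- Let a ∈ ℝ, s > 0, and let f : ℝ → [0,1] be a measurable, integrable function with f(a) = 1, with f(a+h) = 1 − s²h² + o(h²) as h → 0, and such that for every δ > 0 one has sup over {x : |x−a| ≥ δ} of f(x) < 1. Let ψ : ℝ → ℝ be bounded, measurable, and continuous at a. Then for all −∞ ≤ x₁ < x₂ ≤ +∞, ∫_{x₁}^{x₂} ψ(a + u/(s√n)) · f(a + u/(s√n))^n du converges to ψ(a) · ∫_{x₁}^{x₂} e^{−u²} du as n → ∞. -/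
open MeasureTheory Filter Asymptotics

/-!
Write `f` as the sum of its truncations to a small ball around `a` and to the complement of that
ball; the supports being disjoint, `f ^ n` is the sum of their `n`-th powers. Near `a` the
quadratic expansion gives `f (a + h) ^ n → exp (-‖u‖ ^ 2)` at `h = u / (s √n)`, as well as
`|f (a + h)| ≤ exp (-s ^ 2 ‖h‖ ^ 2 / 2)`, whose `n`-th power is the Gaussian
`exp (-‖u‖ ^ 2 / 2)`, independent of `n`: dominated convergence applies. Away from `a` we have
`|f| ≤ m < 1`, and integrability of `f` makes the integral `O(n ^ (d / 2) * m ^ n)`, with `d` the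
dimension.
-/

section Exponential

variable {X : Type*} {l : Filter X} {g q : X → ℝ}

lemma eventually_abs_le_exp_neg_half (hq : ∀ x, 0 ≤ q x) (hq0 : Tendsto q l (nhds 0))
    (hg : (fun x => g x - (1 - q x)) =o[l] q) :
    ∀ᶠ x in l, |g x| ≤ Real.exp (-(q x / 2)) := by
  filter_upwards [hg.def one_half_pos, hq0.eventually_le_const one_pos] with x hgx hqx
  rw [Real.norm_eq_abs, Real.norm_of_nonneg (hq x), abs_le] at hgx
  have hexp := Real.add_one_le_exp (-(q x / 2))
  rw [abs_le]
  constructor <;> linarith [hq x]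

lemma tendsto_pow_exp_neg_of_isLittleO (hg : (fun x => g x - (1 - q x)) =o[l] q)
    {x : ℕ → X} (hx : Tendsto x atTop l) {t : ℝ}
    (ht : Tendsto (fun n : ℕ => n * q (x n)) atTop (nhds t)) :
    Tendsto (fun n => g (x n) ^ n) atTop (nhds (Real.exp (-t))) := by
  have herror : Tendsto (fun n : ℕ => n * (g (x n) - (1 - q (x n)))) atTop (nhds 0) :=
    (isLittleO_one_iff ℝ).1 <|
      ((isBigO_refl (fun n : ℕ => (n : ℝ)) atTop).mul_isLittleO (hg.comp_tendsto hx)).trans_isBigO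
        (ht.isBigO_one ℝ)
  have hlinear : Tendsto (fun n : ℕ => n * (g (x n) - 1)) atTop (nhds (-t)) := by
    convert herror.sub ht using 2
    · ring
    · rw [zero_sub]
  simpa only [add_sub_cancel] using Real.tendsto_one_add_pow_exp_of_tendsto hlinear

end Exponential

section Product

variable {X E : Type*} [NormedAddCommGroup E] [NormedSpace ℝ E] {g : X → ℝ} {ψ : X → E}
  {B m : ℝ} {n : ℕ}

lemma norm_pow_smul_le (hm : 0 < m) (hgm : ∀ x, |g x| ≤ m) (hψB : ∀ x, ‖ψ x‖ ≤ B) (hn : n ≠ 0)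
    (x : X) : ‖g x ^ n • ψ x‖ ≤ m ^ n * (B / m * |g x|) := by
  have hpow : (|g x| / m) ^ n ≤ |g x| / m :=
    pow_le_of_le_one (by positivity) ((div_le_one hm).2 (hgm x)) hn
  calc ‖g x ^ n • ψ x‖ = m ^ n * (|g x| / m) ^ n * ‖ψ x‖ := by
        rw [norm_smul, norm_pow, Real.norm_eq_abs, ← mul_pow, mul_div_cancel₀ _ hm.ne']
    _ ≤ m ^ n * (|g x| / m) * B := by gcongr; exact hψB x
    _ = m ^ n * (B / m * |g x|) := by ring

lemma indicator_pow_smul_add_indicator_compl (K : Set X) (g : X → ℝ) (ψ : X → E) (hn : n ≠ 0)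
    (x : X) : K.indicator g x ^ n • ψ x + Kᶜ.indicator g x ^ n • ψ x = g x ^ n • ψ x := by
  by_cases hx : x ∈ K <;> simp [hx, hn]

variable [MeasurableSpace X] {μ : Measure X} (hg : Integrable g μ)
  (hψ : AEStronglyMeasurable ψ μ) (hψB : ∀ x, ‖ψ x‖ ≤ B)
include hg hψB

lemma integral_norm_pow_smul_le (hm : 0 < m) (hgm : ∀ x, |g x| ≤ m) (hn : n ≠ 0) :
    ∫ x, ‖g x ^ n • ψ x‖ ∂μ ≤ m ^ n * (B / m * ∫ x, |g x| ∂μ) := by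
  simp only [← integral_const_mul]
  exact integral_mono_of_nonneg (.of_forall fun _ => norm_nonneg _)
    ((hg.abs.const_mul _).const_mul _) (.of_forall (norm_pow_smul_le hm hgm hψB hn))

include hψ

lemma integrable_pow_smul (hm : 0 < m) (hgm : ∀ x, |g x| ≤ m) (hn : n ≠ 0) :
    Integrable (fun x => g x ^ n • ψ x) μ :=
  ((hg.abs.const_mul _).const_mul _).mono' ((hg.aestronglyMeasurable.pow n).smul hψ)
    (.of_forall (norm_pow_smul_le hm hgm hψB hn))

end Product

section Localization

variable {V : Type*} [SeminormedAddCommGroup V] {f : V → ℝ} {a : V} {s δ : ℝ}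

lemma indicator_ball_comp_add_eventuallyEq (f : V → ℝ) (a : V) (hδ : 0 < δ) :
    (fun h => (Metric.ball a δ).indicator f (a + h)) =ᶠ[nhds 0] fun h => f (a + h) := by
  filter_upwards [Metric.ball_mem_nhds 0 hδ] with h hh
  exact Set.indicator_of_mem (by simpa using hh) f

lemma exists_abs_indicator_ball_le_exp
    (hexp : (fun h => f (a + h) - (1 - s ^ 2 * ‖h‖ ^ 2)) =o[nhds 0] fun h => s ^ 2 * ‖h‖ ^ 2) :
    ∃ δ > 0, ∀ h, |(Metric.ball a δ).indicator f (a + h)| ≤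
      Real.exp (-(s ^ 2 * ‖h‖ ^ 2 / 2)) := by
  have hquad : Tendsto (fun h : V => s ^ 2 * ‖h‖ ^ 2) (nhds 0) (nhds 0) :=
    Continuous.tendsto' (by fun_prop) _ _ (by simp)
  obtain ⟨δ, hδ, hlocal⟩ := Metric.eventually_nhds_iff_ball.1 <|
    eventually_abs_le_exp_neg_half (fun h => by positivity) hquad hexp
  refine ⟨δ, hδ, fun h => ?_⟩
  by_cases hh : a + h ∈ Metric.ball a δ
  · rw [Set.indicator_of_mem hh]
    exact hlocal h (by simpa using hh)
  · rw [Set.indicator_of_notMem hh, abs_zero]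
    exact Real.exp_nonneg _

lemma abs_le_one_of_abs_comp_add_le_exp
    (hf : ∀ h, |f (a + h)| ≤ Real.exp (-(s ^ 2 * ‖h‖ ^ 2 / 2))) (x : V) : |f x| ≤ 1 := by
  simpa only [add_sub_cancel] using
    (hf (x - a)).trans (Real.exp_le_one_iff.2 (neg_nonpos.2 (by positivity)))

lemma exists_abs_indicator_compl_ball_le (hf : ∃ m < (1 : ℝ), ∀ x, δ ≤ ‖x - a‖ → |f x| ≤ m) :
    ∃ m, 0 < m ∧ m < 1 ∧ ∀ x, |(Metric.ball a δ)ᶜ.indicator f x| ≤ m := by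
  obtain ⟨m, hm1, hfm⟩ := hf
  refine ⟨max m 2⁻¹, by positivity, max_lt hm1 (by norm_num), fun x => ?_⟩
  by_cases hx : x ∈ (Metric.ball a δ)ᶜ
  · rw [Set.indicator_of_mem hx]
    exact (hfm x (by simpa [dist_eq_norm] using hx)).trans (le_max_left _ _)
  · rw [Set.indicator_of_notMem hx, abs_zero]
    positivity

end Localization

section HaarMeasure

variable {V : Type*} [NormedAddCommGroup V] [NormedSpace ℝ V] {s : ℝ}

lemma natCast_mul_norm_inv_mul_sqrt_smul_sq (hs : s ≠ 0) {n : ℕ} (hn : n ≠ 0) (u : V) :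
    n * (s ^ 2 * ‖(s * √n)⁻¹ • u‖ ^ 2) = ‖u‖ ^ 2 := by
  have hn' : (n : ℝ) ≠ 0 := Nat.cast_ne_zero.2 hn
  rw [norm_smul, mul_pow, Real.norm_eq_abs, sq_abs, inv_pow, mul_pow, Real.sq_sqrt n.cast_nonneg]
  field_simp

lemma tendsto_inv_mul_sqrt_smul (s : ℝ) (u : V) :
    Tendsto (fun n : ℕ => (s * √n)⁻¹ • u) atTop (nhds 0) := by
  have hsqrt : Tendsto (fun n : ℕ => (√(n : ℝ))⁻¹) atTop (nhds 0) :=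
    (Real.tendsto_sqrt_atTop.comp tendsto_natCast_atTop_atTop).inv_tendsto_atTop
  simpa only [mul_inv, mul_zero, zero_smul] using (hsqrt.const_mul s⁻¹).smul_const u

variable [FiniteDimensional ℝ V] [MeasurableSpace V] [BorelSpace V]
  {μ : Measure V} [μ.IsAddHaarMeasure]

lemma integrable_exp_neg_mul_norm_sq {b : ℝ} (hb : 0 < b) :
    Integrable (fun u => Real.exp (-b * ‖u‖ ^ 2)) μ := by
  cases subsingleton_or_nontrivial V
  · exact .of_finite
  · refine (integrable_fun_norm_addHaar μ (f := fun y => Real.exp (-b * y ^ 2))).2 ?_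
    have hdim : (-1 : ℝ) < (Module.finrank ℝ V - 1 : ℕ) :=
      neg_one_lt_zero.trans_le (Nat.cast_nonneg _)
    simpa only [Real.rpow_natCast, smul_eq_mul] using integrableOn_rpow_mul_exp_neg_mul_sq hb hdim

variable {E : Type*} [NormedAddCommGroup E] [NormedSpace ℝ E]

lemma integral_comp_add_inv_smul (F : V → E) (a : V) (r : ℝ) :
    ∫ u, F (a + r⁻¹ • u) ∂μ = |r ^ Module.finrank ℝ V| • ∫ x, F x ∂μ := by
  rw [Measure.integral_comp_inv_smul μ (fun v => F (a + v)), integral_add_left_eq_self]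

variable {a : V} {g : V → ℝ} {ψ : V → E} {B : ℝ}
  (hg : Integrable g μ) (hψ : AEStronglyMeasurable ψ μ) (hψB : ∀ x, ‖ψ x‖ ≤ B)
include hg hψ hψB

lemma integrable_pow_smul_comp_add_inv_mul_sqrt_smul (hs : s ≠ 0) (hg1 : ∀ x, |g x| ≤ 1)
    {n : ℕ} (hn : n ≠ 0) :
    Integrable (fun u => g (a + (s * √n)⁻¹ • u) ^ n • ψ (a + (s * √n)⁻¹ • u)) μ := by
  have hr : (s * √n)⁻¹ ≠ 0 := by positivity
  exact ((integrable_pow_smul hg hψ hψB one_pos hg1 hn).comp_add_left a).comp_smul hr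

lemma tendsto_setIntegral_pow_smul_of_abs_le_lt_one (hs : s ≠ 0)
    {m : ℝ} (hm0 : 0 < m) (hm1 : m < 1) (hgm : ∀ x, |g x| ≤ m) (S : Set V) :
    Tendsto (fun n : ℕ =>
      ∫ u in S, g (a + (s * √n)⁻¹ • u) ^ n • ψ (a + (s * √n)⁻¹ • u) ∂μ) atTop (nhds 0) := by
  set d := Module.finrank ℝ V
  set C := |s| ^ d * (B / m * ∫ x, |g x| ∂μ) with hC
  have hB : 0 ≤ B := (norm_nonneg _).trans (hψB a)
  have hbound : Tendsto (fun n : ℕ => C * (n ^ d * m ^ n)) atTop (nhds 0) := by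
    simpa only [mul_zero] using
      (tendsto_pow_const_mul_const_pow_of_lt_one d hm0.le hm1).const_mul C
  refine squeeze_zero_norm' ?_ hbound
  filter_upwards [eventually_ne_atTop 0] with n hn
  have hint := integrable_pow_smul_comp_add_inv_mul_sqrt_smul (a := a) hg hψ hψB hs
    (fun x => (hgm x).trans hm1.le) hn
  have hsqrt : √(n : ℝ) ≤ n :=
    Real.sqrt_le_self_iff.2 (.inr (Nat.one_le_cast.2 (Nat.one_le_iff_ne_zero.2 hn)))
  calc ‖∫ u in S, g (a + (s * √n)⁻¹ • u) ^ n • ψ (a + (s * √n)⁻¹ • u) ∂μ‖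
      ≤ ∫ u in S, ‖g (a + (s * √n)⁻¹ • u) ^ n • ψ (a + (s * √n)⁻¹ • u)‖ ∂μ :=
        norm_integral_le_integral_norm _
    _ ≤ ∫ u, ‖g (a + (s * √n)⁻¹ • u) ^ n • ψ (a + (s * √n)⁻¹ • u)‖ ∂μ :=
        setIntegral_le_integral hint.norm (.of_forall fun _ => norm_nonneg _)
    _ = (|s| * √n) ^ d * ∫ x, ‖g x ^ n • ψ x‖ ∂μ := by
        rw [integral_comp_add_inv_smul (fun x => ‖g x ^ n • ψ x‖), abs_pow, abs_mul,
          abs_of_nonneg (Real.sqrt_nonneg _), smul_eq_mul]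
    _ ≤ (|s| * n) ^ d * (m ^ n * (B / m * ∫ x, |g x| ∂μ)) := by
        gcongr
        exact integral_norm_pow_smul_le hg hψB hm0 hgm hn
    _ = C * (n ^ d * m ^ n) := by rw [hC]; ring

variable [CompleteSpace E]

lemma tendsto_setIntegral_pow_smul_of_abs_le_exp (hs : s ≠ 0) (hψa : ContinuousAt ψ a)
    (hexp : (fun h => g (a + h) - (1 - s ^ 2 * ‖h‖ ^ 2)) =o[nhds 0] fun h => s ^ 2 * ‖h‖ ^ 2)
    (hgexp : ∀ h, |g (a + h)| ≤ Real.exp (-(s ^ 2 * ‖h‖ ^ 2 / 2))) (S : Set V) :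
    Tendsto (fun n : ℕ =>
      ∫ u in S, g (a + (s * √n)⁻¹ • u) ^ n • ψ (a + (s * √n)⁻¹ • u) ∂μ) atTop
      (nhds ((∫ u in S, Real.exp (-‖u‖ ^ 2) ∂μ) • ψ a)) := by
  have hg1 := abs_le_one_of_abs_comp_add_le_exp hgexp
  rw [← integral_smul_const]
  refine tendsto_integral_filter_of_dominated_convergence
    (fun u => Real.exp (-(1 / 2) * ‖u‖ ^ 2) * B) ?_ ?_
    ((integrable_exp_neg_mul_norm_sq one_half_pos).mul_const B).integrableOn
    (.of_forall fun u => ?_)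
  · filter_upwards [eventually_ne_atTop 0] with n hn
    exact (integrable_pow_smul_comp_add_inv_mul_sqrt_smul hg hψ hψB hs hg1
      hn).integrableOn.aestronglyMeasurable
  · filter_upwards [eventually_ne_atTop 0] with n hn
    refine .of_forall fun u => ?_
    rw [norm_smul, norm_pow, Real.norm_eq_abs]
    refine mul_le_mul ?_ (hψB _) (norm_nonneg _) (Real.exp_nonneg _)
    calc |g (a + (s * √n)⁻¹ • u)| ^ n
        ≤ Real.exp (-(s ^ 2 * ‖(s * √n)⁻¹ • u‖ ^ 2 / 2)) ^ n := by gcongr; exact hgexp _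
      _ = Real.exp (-(1 / 2) * (n * (s ^ 2 * ‖(s * √n)⁻¹ • u‖ ^ 2))) := by
          rw [← Real.exp_nat_mul]; ring_nf
      _ = Real.exp (-(1 / 2) * ‖u‖ ^ 2) := by rw [natCast_mul_norm_inv_mul_sqrt_smul_sq hs hn]
  · have hu := tendsto_inv_mul_sqrt_smul s u
    have hquad : Tendsto (fun n : ℕ => n * (s ^ 2 * ‖(s * √n)⁻¹ • u‖ ^ 2)) atTop
        (nhds (‖u‖ ^ 2)) := by
      refine tendsto_const_nhds.congr' ?_
      filter_upwards [eventually_ne_atTop 0] with n hn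
      exact (natCast_mul_norm_inv_mul_sqrt_smul_sq hs hn u).symm
    have hshift : Tendsto (fun n : ℕ => a + (s * √n)⁻¹ • u) atTop (nhds a) := by
      simpa only [add_zero] using hu.const_add a
    exact (tendsto_pow_exp_neg_of_isLittleO hexp hu hquad).smul (hψa.tendsto.comp hshift)

end HaarMeasure

/-- The norm need not be Euclidean: taking `‖h‖ = √(Q h)` covers every positive definite quadratic
form `Q` in place of `‖h‖ ^ 2`. -/
theorem vonMises_aux_one_dim_general
    {V : Type*} [NormedAddCommGroup V] [NormedSpace ℝ V] [FiniteDimensional ℝ V]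
    [MeasurableSpace V] [BorelSpace V] {μ : Measure V} [μ.IsAddHaarMeasure]
    {E : Type*} [NormedAddCommGroup E] [NormedSpace ℝ E] [CompleteSpace E]
    {a : V} {s : ℝ} (hs : s ≠ 0) {f : V → ℝ} (hf : Integrable f μ)
    (hexp : (fun h => f (a + h) - (1 - s ^ 2 * ‖h‖ ^ 2)) =o[nhds 0] fun h => ‖h‖ ^ 2)
    (hsup : ∀ δ > 0, ∃ m < (1 : ℝ), ∀ x, δ ≤ ‖x - a‖ → |f x| ≤ m)
    {ψ : V → E} (hψ : AEStronglyMeasurable ψ μ) {B : ℝ} (hψB : ∀ x, ‖ψ x‖ ≤ B)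
    (hψa : ContinuousAt ψ a) (S : Set V) :
    Tendsto (fun n : ℕ =>
      ∫ u in S, f (a + (s * √n)⁻¹ • u) ^ n • ψ (a + (s * √n)⁻¹ • u) ∂μ) atTop
      (nhds ((∫ u in S, Real.exp (-‖u‖ ^ 2) ∂μ) • ψ a)) := by
  replace hexp := hexp.trans_isBigO (isBigO_self_const_mul (pow_ne_zero 2 hs) _ _)
  obtain ⟨δ, hδ, hnear⟩ := exists_abs_indicator_ball_le_exp hexp
  obtain ⟨m, hm0, hm1, hfar⟩ := exists_abs_indicator_compl_ball_le (hsup δ hδ)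
  set K := Metric.ball a δ
  have hK : MeasurableSet K := measurableSet_ball
  have hexp_near : (fun h => K.indicator f (a + h) - (1 - s ^ 2 * ‖h‖ ^ 2)) =o[nhds 0]
      fun h => s ^ 2 * ‖h‖ ^ 2 :=
    hexp.congr' ((indicator_ball_comp_add_eventuallyEq f a hδ).symm.sub .rfl) .rfl
  have hlim_near := tendsto_setIntegral_pow_smul_of_abs_le_exp (hf.indicator hK) hψ hψB hs hψa
    hexp_near hnear S
  have hlim_far := tendsto_setIntegral_pow_smul_of_abs_le_lt_one (a := a) (hf.indicator hK.compl)
    hψ hψB hs hm0 hm1 hfar S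
  rw [← add_zero (_ • ψ a)]
  refine (hlim_near.add hlim_far).congr' ?_
  filter_upwards [eventually_ne_atTop 0] with n hn
  have hint_near := integrable_pow_smul_comp_add_inv_mul_sqrt_smul (a := a) (hf.indicator hK)
    hψ hψB hs (abs_le_one_of_abs_comp_add_le_exp hnear) hn
  have hint_far := integrable_pow_smul_comp_add_inv_mul_sqrt_smul (a := a)
    (hf.indicator hK.compl) hψ hψB hs (fun x => (hfar x).trans hm1.le) hn
  rw [← integral_add hint_near.integrableOn hint_far.integrableOn]
  simp only [indicator_pow_smul_add_indicator_compl K f ψ hn]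

/-- Von Mises's 1919 one-dimensional auxiliary theorem (equal factors case):
for a function `f ≤ 1` with a unique nondegenerate maximum `f(a) = 1`,
`∫_{x₁}^{x₂} ψ(a + u/(s√n)) f(a + u/(s√n))^n du → ψ(a) ∫_{x₁}^{x₂} e^{−u²} du`,
with possibly infinite endpoints `x₁ < x₂`. -/
theorem vonMises_aux_one_dim
    (a s : ℝ) (hs : 0 < s)
    (f : ℝ → ℝ) (hf_meas : Measurable f) (hf_int : Integrable f)
    (hf01 : ∀ x, f x ∈ Set.Icc (0:ℝ) 1) (hfa : f a = 1)
    (hexp : (fun h : ℝ => f (a + h) - (1 - s ^ 2 * h ^ 2)) =o[nhds 0] (fun h : ℝ => h ^ 2))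
    (hsup : ∀ δ > 0, ∃ m < (1:ℝ), ∀ x, δ ≤ |x - a| → f x ≤ m)
    (ψ : ℝ → ℝ) (hψ_meas : Measurable ψ) (hψ_bdd : ∃ B, ∀ x, |ψ x| ≤ B)
    (hψ_cont : ContinuousAt ψ a)
    (x₁ x₂ : EReal) (h12 : x₁ < x₂) :
    Tendsto (fun n : ℕ =>
      ∫ u in {u : ℝ | x₁ < (u : EReal) ∧ (u : EReal) < x₂},
        ψ (a + u / (s * Real.sqrt n)) * f (a + u / (s * Real.sqrt n)) ^ n)
      atTop
      (nhds (ψ a * ∫ u in {u : ℝ | x₁ < (u : EReal) ∧ (u : EReal) < x₂},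
        Real.exp (-u ^ 2))) := by
  obtain ⟨B, hψB⟩ := hψ_bdd
  simpa [mul_comm, div_eq_inv_mul] using vonMises_aux_one_dim_general (a := a) hs.ne' hf_int
    (by simpa using hexp) (by simpa [abs_of_nonneg (hf01 _).1] using hsup)
    hψ_meas.aestronglyMeasurable hψB hψ_cont _
end

section
/- Fix a ∈ (0,1). Then √(n/(2a(1−a))) · ∫_0^1 (x/a)^{a n} ((1−x)/(1−a))^{(1−a)n} dx converges to √π as n → ∞ (the exponents a n and (1−a)n being real). -/
/-!
The integrand is `exp (-t D(a ‖ x))`, where `D(a ‖ x)` is the relative entropy of the Bernoulli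
laws with parameters `a` and `x`. As a function of `x` it dominates `(x - a)² / 2` on `(0, 1)`,
because it dominates the squared Hellinger distance, and it is asymptotic to
`(x - a)² / (2a(1 - a))` at `a`. Laplace's method, that is, the substitution `x = a + u / √t`
followed by dominated convergence, then reduces the limit to a Gaussian integral.
-/

open MeasureTheory Filter Real

open scoped Topology

section LaplaceMethod

variable {φ : ℝ → ℝ} {s : Set ℝ} {a c κ : ℝ}

lemma tendsto_add_div_sqrt (a u : ℝ) : Tendsto (fun t : ℝ => a + u / √t) atTop (𝓝 a) := by
  simpa using (tendsto_sqrt_atTop.const_div_atTop u).const_add a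

lemma mul_sq_add_div_sqrt_sub {t : ℝ} (ht : 0 < t) (a u : ℝ) :
    t * (a + u / √t - a) ^ 2 = u ^ 2 := by
  rw [add_sub_cancel_left, div_pow, sq_sqrt ht.le, mul_div_cancel₀ _ ht.ne']

lemma tendsto_mul_comp_add_div_sqrt
    (hφ : (fun x => φ x - κ * (x - a) ^ 2) =o[𝓝 a] fun x => (x - a) ^ 2) (u : ℝ) :
    Tendsto (fun t => t * φ (a + u / √t)) atTop (𝓝 (κ * u ^ 2)) := by
  have hrescaled : (fun t : ℝ => t * (a + u / √t - a) ^ 2) =ᶠ[atTop] fun _ => u ^ 2 := by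
    filter_upwards [eventually_gt_atTop 0] with t ht
    exact mul_sq_add_div_sqrt_sub ht a u
  have hremainder : Tendsto (fun t => t * (φ (a + u / √t) - κ * (a + u / √t - a) ^ 2))
      atTop (𝓝 0) := by
    have hlittle := (Asymptotics.isBigO_refl (fun t : ℝ => t) atTop).mul_isLittleO
      (hφ.comp_tendsto (tendsto_add_div_sqrt a u))
    exact (hlittle.congr' .rfl hrescaled).tendsto_zero_of_tendsto tendsto_const_nhds
  have hmain : Tendsto (fun t : ℝ => κ * (t * (a + u / √t - a) ^ 2)) atTop (𝓝 (κ * u ^ 2)) :=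
    (tendsto_const_nhds.congr' hrescaled.symm).const_mul κ
  simpa using (hremainder.add hmain).congr fun t => by ring

lemma sqrt_mul_integral_eq_integral_comp_add_div_sqrt (g : ℝ → ℝ) (a t : ℝ) :
    √t * ∫ x, g x = ∫ u, g (a + u / √t) := by
  rw [Measure.integral_comp_div (fun y => g (a + y)), integral_add_left_eq_self g a,
    abs_of_nonneg (sqrt_nonneg t), smul_eq_mul]

lemma quasiMeasurePreserving_add_div (a : ℝ) {r : ℝ} (hr : r ≠ 0) :
    Measure.QuasiMeasurePreserving (fun u : ℝ => a + u / r) := by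
  simpa only [Function.comp_def, smul_eq_mul, div_eq_inv_mul] using
    (measurePreserving_add_left volume a).quasiMeasurePreserving.comp
      (Measure.quasiMeasurePreserving_smul volume (inv_ne_zero hr))

lemma norm_indicator_exp_neg_mul_comp_add_div_sqrt_le (hφ : ∀ x ∈ s, c * (x - a) ^ 2 ≤ φ x)
    {t : ℝ} (ht : 0 < t) (u : ℝ) :
    ‖s.indicator (fun x => exp (-(t * φ x))) (a + u / √t)‖ ≤ exp (-c * u ^ 2) := by
  by_cases hmem : a + u / √t ∈ s
  · rw [Set.indicator_of_mem hmem, norm_of_nonneg (exp_nonneg _), exp_le_exp, neg_mul,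
      neg_le_neg_iff]
    calc c * u ^ 2 = t * (c * (a + u / √t - a) ^ 2) := by
          rw [← mul_sq_add_div_sqrt_sub ht a u]; ring
      _ ≤ t * φ (a + u / √t) := by gcongr; exact hφ _ hmem
  · rw [Set.indicator_of_notMem hmem, norm_zero]
    positivity

theorem tendsto_sqrt_mul_setIntegral_exp_neg_mul (hs : MeasurableSet s) (hsa : s ∈ 𝓝 a)
    (hmeas : AEMeasurable φ (volume.restrict s)) (hc : 0 < c)
    (hgrowth : ∀ x ∈ s, c * (x - a) ^ 2 ≤ φ x)
    (hquad : (fun x => φ x - κ * (x - a) ^ 2) =o[𝓝 a] fun x => (x - a) ^ 2) :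
    Tendsto (fun t => √t * ∫ x in s, exp (-(t * φ x))) atTop (𝓝 √(π / κ)) := by
  have hlim : Tendsto (fun t : ℝ => ∫ u, s.indicator (fun x => exp (-(t * φ x))) (a + u / √t))
      atTop (𝓝 (∫ u, exp (-κ * u ^ 2))) := by
    refine tendsto_integral_filter_of_dominated_convergence (fun u => exp (-c * u ^ 2)) ?_ ?_
      (integrable_exp_neg_mul_sq hc) (ae_of_all _ fun u => ?_)
    · filter_upwards [eventually_gt_atTop 0] with t ht
      have hexp : AEMeasurable (s.indicator fun x => exp (-(t * φ x))) :=
        (aemeasurable_indicator_iff hs).2 (hmeas.const_mul t).neg.exp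
      exact (hexp.comp_quasiMeasurePreserving
        (quasiMeasurePreserving_add_div a (sqrt_pos.2 ht).ne')).aestronglyMeasurable
    · filter_upwards [eventually_gt_atTop 0] with t ht
      exact ae_of_all _ (norm_indicator_exp_neg_mul_comp_add_div_sqrt_le hgrowth ht)
    · have hpoint := (tendsto_mul_comp_add_div_sqrt hquad u).neg.rexp
      rw [← neg_mul] at hpoint
      refine hpoint.congr' ?_
      filter_upwards [(tendsto_add_div_sqrt a u).eventually_mem hsa] with t hmem
      exact (Set.indicator_of_mem hmem fun x => exp (-(t * φ x))).symm
  rw [integral_gaussian] at hlim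
  refine hlim.congr fun t => ?_
  rw [← sqrt_mul_integral_eq_integral_comp_add_div_sqrt, integral_indicator hs]

end LaplaceMethod

section RelativeEntropy

variable {a p x : ℝ}

lemma log_one_add_sub_isLittleO :
    (fun u : ℝ => log (1 + u) - u + u ^ 2 / 2) =o[𝓝 0] fun u => u ^ 2 := by
  refine Asymptotics.IsBigO.trans_isLittleO (g := fun u : ℝ => u ^ 3) ?_
    (Asymptotics.isLittleO_pow_pow (by norm_num))
  refine Asymptotics.IsBigO.of_bound 2 ?_
  filter_upwards [Metric.ball_mem_nhds (0 : ℝ) one_half_pos] with u hu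
  have hu_lt : |u| < 1 / 2 := by simpa using hu
  have htaylor : |log (1 + u) - u + u ^ 2 / 2| ≤ |u| ^ 3 / (1 - |u|) := by
    have h := abs_log_sub_add_sum_range_le (x := -u) (by rw [abs_neg]; linarith) 2
    rw [abs_neg] at h
    convert h using 2
    simp only [Finset.sum_range_succ, Finset.sum_range_zero]
    push_cast
    ring_nf
  calc ‖log (1 + u) - u + u ^ 2 / 2‖ ≤ |u| ^ 3 / (1 - |u|) := htaylor
    _ ≤ |u| ^ 3 / (1 / 2) := by gcongr; linarith
    _ = 2 * ‖u ^ 3‖ := by rw [norm_pow, norm_eq_abs]; ring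

lemma mul_log_div_sub_isLittleO (hp : p ≠ 0) :
    (fun x => p * log (p / x) + (x - p) - (x - p) ^ 2 / (2 * p)) =o[𝓝 p]
      fun x => (x - p) ^ 2 := by
  have hu : Tendsto (fun x => (x - p) / p) (𝓝 p) (𝓝 0) :=
    Continuous.tendsto' (by fun_prop) _ _ (by simp)
  have hsq : (fun x => ((x - p) / p) ^ 2) =O[𝓝 p] fun x => (x - p) ^ 2 := by
    simpa only [div_eq_inv_mul, mul_pow, inv_pow] using
      Asymptotics.isBigO_const_mul_self (p ^ 2)⁻¹ (fun x => (x - p) ^ 2) (𝓝 p)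
  refine (((log_one_add_sub_isLittleO.comp_tendsto hu).trans_isBigO hsq).const_mul_left
    (-p)).congr_left fun x => ?_
  have hlog : log (1 + (x - p) / p) = -log (p / x) := by
    rw [← log_inv, inv_div]
    congr 1
    field_simp
    ring
  simp only [Function.comp_apply, hlog]
  field_simp
  ring

lemma sq_sqrt_sub_sqrt_le_mul_log_div (hp : 0 < p) (hx : 0 < x) :
    (√x - √p) ^ 2 ≤ p * log (p / x) + (x - p) := by
  have hlog : 1 - √x / √p ≤ log (p / x) / 2 := by
    have h := one_sub_inv_le_log_of_pos (sqrt_pos.2 (div_pos hp hx))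
    rwa [log_sqrt (div_pos hp hx).le, sqrt_div hp.le, inv_div] at h
  have hpx : p * (√x / √p) = √p * √x := by
    rw [mul_div_assoc', mul_div_right_comm, div_sqrt]
  nlinarith [mul_le_mul_of_nonneg_left hlog hp.le, sq_sqrt hp.le, sq_sqrt hx.le]

lemma sq_sub_le_four_mul_sq_sqrt_sub_sqrt (hx : x ∈ Set.Icc 0 1) (hp : p ∈ Set.Icc 0 1) :
    (x - p) ^ 2 ≤ 4 * (√x - √p) ^ 2 := by
  have hsum : (√x + √p) ^ 2 ≤ 2 ^ 2 := by
    gcongr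
    linarith [sqrt_le_one.2 hx.2, sqrt_le_one.2 hp.2]
  calc (x - p) ^ 2 = (√x + √p) ^ 2 * (√x - √p) ^ 2 := by
        rw [← mul_pow, ← sq_sub_sq, sq_sqrt hx.1, sq_sqrt hp.1]
    _ ≤ 2 ^ 2 * (√x - √p) ^ 2 := by gcongr
    _ = 4 * (√x - √p) ^ 2 := by norm_num

/-- The relative entropy (Kullback–Leibler divergence) of the Bernoulli law with parameter `a` with
respect to the one with parameter `x`, in natural units; meaningful for `a, x ∈ (0, 1)`. It is the
phase to which Laplace's method is applied. -/
noncomputable def bernoulliRelEntropy (a x : ℝ) : ℝ :=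
  a * log (a / x) + (1 - a) * log ((1 - a) / (1 - x))

lemma measurable_bernoulliRelEntropy (a : ℝ) : Measurable (bernoulliRelEntropy a) := by
  unfold bernoulliRelEntropy
  fun_prop

lemma one_half_mul_sq_sub_le_bernoulliRelEntropy (ha : a ∈ Set.Ioo 0 1) (hx : x ∈ Set.Ioo 0 1) :
    1 / 2 * (x - a) ^ 2 ≤ bernoulliRelEntropy a x := by
  have ha' : 1 - a ∈ Set.Ioo 0 1 := Set.Ioo.one_sub_mem ha
  have hx' : 1 - x ∈ Set.Ioo 0 1 := Set.Ioo.one_sub_mem hx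
  have hsuccess := sq_sub_le_four_mul_sq_sqrt_sub_sqrt (Set.Ioo_subset_Icc_self hx)
    (Set.Ioo_subset_Icc_self ha)
  have hfailure := sq_sub_le_four_mul_sq_sqrt_sub_sqrt (Set.Ioo_subset_Icc_self hx')
    (Set.Ioo_subset_Icc_self ha')
  rw [show (1 - x - (1 - a)) ^ 2 = (x - a) ^ 2 by ring] at hfailure
  unfold bernoulliRelEntropy
  linarith [sq_sqrt_sub_sqrt_le_mul_log_div ha.1 hx.1,
    sq_sqrt_sub_sqrt_le_mul_log_div ha'.1 hx'.1]

lemma bernoulliRelEntropy_sub_isLittleO (ha₀ : a ≠ 0) (ha₁ : a ≠ 1) :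
    (fun x => bernoulliRelEntropy a x - 1 / (2 * a * (1 - a)) * (x - a) ^ 2) =o[𝓝 a]
      fun x => (x - a) ^ 2 := by
  have ha₁' : 1 - a ≠ 0 := sub_ne_zero.2 ha₁.symm
  have hflip : Tendsto (fun x : ℝ => 1 - x) (𝓝 a) (𝓝 (1 - a)) := tendsto_id.const_sub 1
  have hfailure := ((mul_log_div_sub_isLittleO ha₁').comp_tendsto hflip).congr_right
    fun x => show (1 - x - (1 - a)) ^ 2 = (x - a) ^ 2 by ring
  refine ((mul_log_div_sub_isLittleO ha₀).add hfailure).congr_left fun x => ?_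
  simp only [Function.comp_apply, bernoulliRelEntropy]
  field_simp
  ring

lemma rpow_mul_rpow_eq_exp_neg_mul_bernoulliRelEntropy (ha : a ∈ Set.Ioo 0 1)
    (hx : x ∈ Set.Ioo 0 1) (t : ℝ) :
    (x / a) ^ (a * t) * ((1 - x) / (1 - a)) ^ ((1 - a) * t) =
      exp (-(t * bernoulliRelEntropy a x)) := by
  rw [rpow_def_of_pos (div_pos hx.1 ha.1), rpow_def_of_pos (div_pos (sub_pos.2 hx.2)
    (sub_pos.2 ha.2)), ← exp_add, bernoulliRelEntropy, ← inv_div x a, ← inv_div (1 - x) (1 - a),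
    log_inv, log_inv]
  ring_nf

end RelativeEntropy

theorem vonMises_normalizing_constant_general (a : ℝ) (ha : a ∈ Set.Ioo 0 1) :
    Tendsto (fun t : ℝ =>
      √(t / (2 * a * (1 - a))) *
        ∫ x in (0 : ℝ)..1, (x / a) ^ (a * t) * ((1 - x) / (1 - a)) ^ ((1 - a) * t))
      atTop (𝓝 √π) := by
  have hvar : 0 < 2 * a * (1 - a) := mul_pos (mul_pos two_pos ha.1) (sub_pos.2 ha.2)
  have hlaplace := (tendsto_sqrt_mul_setIntegral_exp_neg_mul measurableSet_Ioo
    (Ioo_mem_nhds ha.1 ha.2) (measurable_bernoulliRelEntropy a).aemeasurable one_half_pos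
    (fun _ => one_half_mul_sq_sub_le_bernoulliRelEntropy ha)
    (bernoulliRelEntropy_sub_isLittleO ha.1.ne' ha.2.ne)).div_const √(2 * a * (1 - a))
  rw [div_div_eq_mul_div, div_one, ← sqrt_div' _ hvar.le, mul_div_cancel_right₀ _ hvar.ne']
    at hlaplace
  refine hlaplace.congr fun t => ?_
  rw [sqrt_div' _ hvar.le, intervalIntegral.integral_of_le zero_le_one,
    integral_Ioc_eq_integral_Ioo, setIntegral_congr_fun measurableSet_Ioo fun x hx =>
      rpow_mul_rpow_eq_exp_neg_mul_bernoulliRelEntropy ha hx t, div_mul_eq_mul_div]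

/-- Von Mises's 1919 determination of the normalizing constant of the binomial
posterior with constant relative frequency `a`:
`r_n ∫₀¹ (x/a)^{an} ((1−x)/(1−a))^{(1−a)n} dx → √π` with `r_n = √(n/(2a(1−a)))`. -/
theorem vonMises_normalizing_constant (a : ℝ) (ha : a ∈ Set.Ioo (0:ℝ) 1) :
    Tendsto (fun n : ℕ =>
      Real.sqrt ((n : ℝ) / (2 * a * (1 - a))) *
        ∫ x in (0:ℝ)..1,
          (x / a) ^ (a * (n : ℝ)) * ((1 - x) / (1 - a)) ^ ((1 - a) * (n : ℝ)))
      atTop (nhds (Real.sqrt π)) :=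
  (vonMises_normalizing_constant_general a ha).comp tendsto_natCast_atTop_atTop
end

section
/- Fix a ∈ (0,1), let r_n := √(n/(2a(1−a))), and let w_n(x) := x^{a n}(1−x)^{(1−a)n} / ∫_0^1 t^{a n}(1−t)^{(1−a)n} dt for x ∈ [0,1] (real exponents), extended by 0 outside [0,1]. Then for all −∞ ≤ x₁ < x₂ ≤ +∞, ∫_{a + x₁/r_n}^{a + x₂/r_n} w_n(x) dx converges to (1/√π) ∫_{x₁}^{x₂} e^{−u²} du as n → ∞. -/
open MeasureTheory Filter Real

/-!
Dividing the likelihood by its value `a^(a n) (1 - a)^((1 - a) n)` at the mode `x = a` leaves the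
posterior density unchanged and turns the likelihood into the `n`-th power of
`ℓ(x) = (x / a)^a ((1 - x) / (1 - a))^(1 - a)`. In the coordinate `u = r_n (x - a)` this power tends
pointwise to `exp (-u²)`, because the linear terms of `log ℓ` cancel at `a` and its second
derivative there is `-1 / (a (1 - a))`. Two applications of the AM-GM inequality give
`ℓ(x) ≤ 1 - (x - a)² ≤ exp (-(x - a)²)`, so that the `n`-th power lies below the
fixed Gaussian `exp (-2 a (1 - a) u²)`. Dominated convergence then applies to both the numerator and
the normalising integral of the posterior probability.
-/

open Asymptotics Topology

lemma tendsto_setIntegral_div_integral_of_dominated {α ι 𝕜 : Type*} [MeasurableSpace α]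
    [RCLike 𝕜] {μ : Measure α} {l : Filter ι} [l.IsCountablyGenerated] {F : ι → α → 𝕜} {f : α → 𝕜}
    (bound : α → ℝ) (hF_meas : ∀ᶠ i in l, AEStronglyMeasurable (F i) μ)
    (h_bound : ∀ᶠ i in l, ∀ᵐ x ∂μ, ‖F i x‖ ≤ bound x) (bound_integrable : Integrable bound μ)
    (h_lim : ∀ᵐ x ∂μ, Tendsto (F · x) l (𝓝 (f x))) (hf : ∫ x, f x ∂μ ≠ 0) (S : Set α) :
    Tendsto (fun i => (∫ x in S, F i x ∂μ) / ∫ x, F i x ∂μ) l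
      (𝓝 ((∫ x in S, f x ∂μ) / ∫ x, f x ∂μ)) := by
  refine Tendsto.div ?_
    (tendsto_integral_filter_of_dominated_convergence bound hF_meas h_bound bound_integrable h_lim)
    hf
  exact tendsto_integral_filter_of_dominated_convergence bound
    (hF_meas.mono fun _ h => h.restrict) (h_bound.mono fun _ h => ae_restrict_of_ae h)
    bound_integrable.restrict (ae_restrict_of_ae h_lim)

section AffineChangeOfVariables

variable {E : Type*} [NormedAddCommGroup E] [NormedSpace ℝ E] {r : ℝ}

lemma map_volume_mul_sub (hr : r ≠ 0) (a : ℝ) :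
    Measure.map (fun x => r * (x - a)) volume = ENNReal.ofReal |r⁻¹| • volume := by
  rw [← Real.map_volume_mul_left hr]
  nth_rw 2 [← map_sub_right_eq_self volume a]
  rw [Measure.map_map (by fun_prop) (by fun_prop)]
  rfl

lemma setIntegral_comp_mul_sub (hr : r ≠ 0) (a : ℝ) (f : ℝ → E) (S : Set ℝ) :
    ∫ x in {x | r * (x - a) ∈ S}, f (r * (x - a)) = |r⁻¹| • ∫ u in S, f u := by
  have h_emb : MeasurableEmbedding fun x => r * (x - a) :=
    (measurableEmbedding_mulLeft₀ hr).comp (MeasurableEquiv.subRight a).measurableEmbedding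
  rw [← ENNReal.toReal_ofReal (abs_nonneg r⁻¹), ← integral_smul_measure, ← Measure.restrict_smul,
    ← map_volume_mul_sub hr a, h_emb.setIntegral_map]
  rfl

lemma setIntegral_eq_smul_setIntegral_add_div (hr : r ≠ 0) (a : ℝ) (f : ℝ → E) (S : Set ℝ) :
    ∫ x in {x | r * (x - a) ∈ S}, f x = |r⁻¹| • ∫ u in S, f (a + u / r) := by
  rw [← setIntegral_comp_mul_sub hr a (fun u => f (a + u / r))]
  simp only [mul_div_cancel_left₀ _ hr, add_sub_cancel]

end AffineChangeOfVariables

lemma setIntegral_div_integral_eq_comp_add_div {𝕜 : Type*} [RCLike 𝕜] {r : ℝ} (hr : r ≠ 0)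
    (a : ℝ) (f : ℝ → 𝕜) (S : Set ℝ) :
    (∫ x in {x | r * (x - a) ∈ S}, f x) / ∫ x, f x =
      (∫ u in S, f (a + u / r)) / ∫ u, f (a + u / r) := by
  have h_univ := setIntegral_eq_smul_setIntegral_add_div hr a f Set.univ
  simp only [Set.mem_univ, Set.ofPred_true, setIntegral_univ] at h_univ
  rw [h_univ, setIntegral_eq_smul_setIntegral_add_div hr, RCLike.real_smul_eq_coe_mul,
    RCLike.real_smul_eq_coe_mul,
    mul_div_mul_left _ _ (RCLike.ofReal_ne_zero.2 (abs_ne_zero.2 (inv_ne_zero hr)))]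

lemma log_one_add_sub_isBigO :
    (fun h : ℝ => log (1 + h) - (h - h ^ 2 / 2)) =O[𝓝 0] fun h => h ^ 3 := by
  have h_series := hasFPowerSeriesAt_log_one_add.isBigO_sub_partialSum_pow 3
  have h_partialSum (h : ℝ) : (FormalMultilinearSeries.ofScalars ℝ
      fun n : ℕ => -(-1 : ℝ) ^ n / n).partialSum 3 h = h - h ^ 2 / 2 := by
    simp [FormalMultilinearSeries.partialSum, Finset.sum_range_succ, sub_eq_add_neg, add_comm,
      div_eq_mul_inv]
  refine (h_series.trans (isBigO_of_le _ fun h => by simp)).congr_left fun h => ?_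
  rw [h_partialSum, zero_add]

lemma tendsto_sq_mul_log_one_add_div_sub (c : ℝ) :
    Tendsto (fun r : ℝ => r ^ 2 * (log (1 + c / r) - c / r)) atTop (𝓝 (-(c ^ 2 / 2))) := by
  have h_div : Tendsto (fun r : ℝ => c / r) atTop (𝓝 0) := tendsto_const_nhds.div_atTop tendsto_id
  have h_error :
      Tendsto (fun r : ℝ => r ^ 2 * (log (1 + c / r) - (c / r - (c / r) ^ 2 / 2))) atTop (𝓝 0) := by
    refine ((isBigO_refl (fun r : ℝ => r ^ 2) atTop).mul
      (log_one_add_sub_isBigO.comp_tendsto h_div)).trans_tendsto ?_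
    have h_cubic : Tendsto (fun r : ℝ => c ^ 2 * (c / r)) atTop (𝓝 0) := by
      simpa using h_div.const_mul (c ^ 2)
    refine h_cubic.congr' ?_
    filter_upwards [eventually_ne_atTop 0] with r hr
    simp only [Function.comp_apply]
    field_simp
  have h_sum := h_error.sub_const (c ^ 2 / 2)
  rw [zero_sub] at h_sum
  refine h_sum.congr' ?_
  filter_upwards [eventually_ne_atTop 0] with r hr
  field_simp
  ring

lemma mul_sqrt_div {a : ℝ} (ha : 0 ≤ a) (x : ℝ) : a * √(x / a) = √(a * x) := by
  calc a * √(x / a) = √(a * a * (x / a)) := by rw [sqrt_mul (mul_self_nonneg a), sqrt_mul_self ha]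
    _ = √(a * x) := by
      congr 1
      field_simp

lemma tendsto_add_div_atTop (a u : ℝ) : Tendsto (fun r : ℝ => a + u / r) atTop (𝓝 a) := by
  simpa using (tendsto_const_nhds.div_atTop tendsto_id).const_add a

/-- The likelihood of the success probability `x` per observation when the relative frequency of
successes is `a`, divided by its value at the mode `x = a`. -/
noncomputable def bernoulliRelLikelihood (a x : ℝ) : ℝ :=
  (x / a) ^ a * ((1 - x) / (1 - a)) ^ (1 - a)

section Bernoulli

variable {a x : ℝ}

lemma measurable_bernoulliRelLikelihood (a : ℝ) : Measurable (bernoulliRelLikelihood a) := by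
  unfold bernoulliRelLikelihood
  fun_prop

lemma bernoulliRelLikelihood_nonneg (ha : a ∈ Set.Icc (0 : ℝ) 1) (hx : x ∈ Set.Icc (0 : ℝ) 1) :
    0 ≤ bernoulliRelLikelihood a x :=
  mul_nonneg (rpow_nonneg (div_nonneg hx.1 ha.1) _)
    (rpow_nonneg (div_nonneg (sub_nonneg.2 hx.2) (sub_nonneg.2 ha.2)) _)

lemma bernoulliRelLikelihood_pos (ha : a ∈ Set.Ioo (0 : ℝ) 1) (hx : x ∈ Set.Ioo (0 : ℝ) 1) :
    0 < bernoulliRelLikelihood a x :=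
  mul_pos (rpow_pos_of_pos (div_pos hx.1 ha.1) _)
    (rpow_pos_of_pos (div_pos (sub_pos.2 hx.2) (sub_pos.2 ha.2)) _)

-- The right-hand side is the squared Hellinger affinity of the Bernoulli laws of means `a` and `x`.
lemma bernoulliRelLikelihood_le_sq (ha : a ∈ Set.Icc (0 : ℝ) 1) (hx : x ∈ Set.Icc (0 : ℝ) 1) :
    bernoulliRelLikelihood a x ≤ (√(a * x) + √((1 - a) * (1 - x))) ^ 2 := by
  have ha' : 0 ≤ 1 - a := sub_nonneg.2 ha.2
  have h_success : 0 ≤ x / a := div_nonneg hx.1 ha.1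
  have h_failure : 0 ≤ (1 - x) / (1 - a) := div_nonneg (sub_nonneg.2 hx.2) ha'
  have h_sqrt_pow {t : ℝ} (ht : 0 ≤ t) (w : ℝ) : t ^ w = (√t ^ w) ^ 2 := by
    rw [rpow_pow_comm (sqrt_nonneg t), sq_sqrt ht]
  calc bernoulliRelLikelihood a x
      = (√(x / a) ^ a * √((1 - x) / (1 - a)) ^ (1 - a)) ^ 2 := by
        rw [mul_pow, ← h_sqrt_pow h_success, ← h_sqrt_pow h_failure, bernoulliRelLikelihood]
    _ ≤ (a * √(x / a) + (1 - a) * √((1 - x) / (1 - a))) ^ 2 := by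
        gcongr
        exact geom_mean_le_arith_mean2_weighted ha.1 ha' (sqrt_nonneg _) (sqrt_nonneg _)
          (add_sub_cancel a 1)
    _ = (√(a * x) + √((1 - a) * (1 - x))) ^ 2 := by
        rw [mul_sqrt_div ha.1, mul_sqrt_div ha']

lemma sq_sqrt_mul_add_sqrt_mul_le (ha : a ∈ Set.Icc (0 : ℝ) 1) (hx : x ∈ Set.Icc (0 : ℝ) 1) :
    (√(a * x) + √((1 - a) * (1 - x))) ^ 2 ≤ 1 - (x - a) ^ 2 := by
  have ha' : 0 ≤ 1 - a := sub_nonneg.2 ha.2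
  have hx' : 0 ≤ 1 - x := sub_nonneg.2 hx.2
  have h_cross : √(a * x) * √((1 - a) * (1 - x)) = √(a * (1 - a)) * √(x * (1 - x)) := by
    rw [← sqrt_mul (mul_nonneg ha.1 hx.1), ← sqrt_mul (mul_nonneg ha.1 ha')]
    congr 1
    ring
  have h_amgm : 2 * √(a * (1 - a)) * √(x * (1 - x)) ≤ a * (1 - a) + x * (1 - x) := by
    simpa only [sq_sqrt (mul_nonneg ha.1 ha'), sq_sqrt (mul_nonneg hx.1 hx')]
      using two_mul_le_add_sq √(a * (1 - a)) √(x * (1 - x))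
  calc (√(a * x) + √((1 - a) * (1 - x))) ^ 2
      = a * x + (1 - a) * (1 - x) + 2 * √(a * (1 - a)) * √(x * (1 - x)) := by
        rw [add_sq, sq_sqrt (mul_nonneg ha.1 hx.1), sq_sqrt (mul_nonneg ha' hx')]
        linear_combination 2 * h_cross
    _ ≤ a * x + (1 - a) * (1 - x) + (a * (1 - a) + x * (1 - x)) := by gcongr
    _ = 1 - (x - a) ^ 2 := by ring

lemma bernoulliRelLikelihood_le_exp (ha : a ∈ Set.Icc (0 : ℝ) 1) (hx : x ∈ Set.Icc (0 : ℝ) 1) :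
    bernoulliRelLikelihood a x ≤ exp (-(x - a) ^ 2) :=
  (bernoulliRelLikelihood_le_sq ha hx).trans <|
    (sq_sqrt_mul_add_sqrt_mul_le ha hx).trans (one_sub_le_exp_neg _)

lemma log_bernoulliRelLikelihood (ha : a ∈ Set.Ioo (0 : ℝ) 1) (hx : x ∈ Set.Ioo (0 : ℝ) 1) :
    log (bernoulliRelLikelihood a x) = a * log (x / a) + (1 - a) * log ((1 - x) / (1 - a)) := by
  have h_success : 0 < x / a := div_pos hx.1 ha.1
  have h_failure : 0 < (1 - x) / (1 - a) := div_pos (sub_pos.2 hx.2) (sub_pos.2 ha.2)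
  rw [bernoulliRelLikelihood, log_mul (by positivity) (by positivity), log_rpow h_success,
    log_rpow h_failure]

lemma tendsto_sq_mul_log_bernoulliRelLikelihood (ha : a ∈ Set.Ioo (0 : ℝ) 1) (u : ℝ) :
    Tendsto (fun r : ℝ => r ^ 2 * log (bernoulliRelLikelihood a (a + u / r))) atTop
      (𝓝 (-(u ^ 2 / (2 * a * (1 - a))))) := by
  have ha₀ : a ≠ 0 := ha.1.ne'
  have ha₁ : 1 - a ≠ 0 := (sub_pos.2 ha.2).ne'
  have h_lim := ((tendsto_sq_mul_log_one_add_div_sub (u / a)).const_mul a).add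
    ((tendsto_sq_mul_log_one_add_div_sub (-u / (1 - a))).const_mul (1 - a))
  have h_value : a * -((u / a) ^ 2 / 2) + (1 - a) * -((-u / (1 - a)) ^ 2 / 2) =
      -(u ^ 2 / (2 * a * (1 - a))) := by
    field_simp
    ring
  rw [h_value] at h_lim
  refine h_lim.congr' ?_
  filter_upwards [(tendsto_add_div_atTop a u).eventually (Ioo_mem_nhds ha.1 ha.2),
    eventually_ne_atTop 0] with r h_mem hr
  have h_success : (a + u / r) / a = 1 + u / a / r := by field_simp
  have h_failure : (1 - (a + u / r)) / (1 - a) = 1 + -u / (1 - a) / r := by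
    field_simp
    ring
  have h_linear : a * (u / a / r) + (1 - a) * (-u / (1 - a) / r) = 0 := by
    field_simp
    ring
  rw [log_bernoulliRelLikelihood ha h_mem, h_success, h_failure]
  linear_combination -r ^ 2 * h_linear

end Bernoulli

/-- The likelihood of the success probability `x` after `a * n` successes in `n` trials, divided by
its value at the mode `x = a` and extended by `0` outside `[0, 1]`. -/
noncomputable def binomialRelLikelihood (a n : ℝ) : ℝ → ℝ :=
  (Set.Icc 0 1).indicator fun x => bernoulliRelLikelihood a x ^ n

/-- The posterior density at `x` of the success probability after `a * n` successes in `n` trials,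
under the uniform prior. -/
noncomputable def binomialPosterior (a n x : ℝ) : ℝ :=
  if x ∈ Set.Icc (0 : ℝ) 1 then
    x ^ (a * n) * (1 - x) ^ ((1 - a) * n) / ∫ t in (0 : ℝ)..1, t ^ (a * n) * (1 - t) ^ ((1 - a) * n)
  else 0

/-- Von Mises's `r_n`: the factor that brings the fluctuations of the success probability around `a`
under the posterior density to unit order. -/
noncomputable def posteriorScale (a n : ℝ) : ℝ :=
  √(n / (2 * a * (1 - a)))

section Binomial

variable {a n : ℝ}

lemma rpow_mul_one_sub_rpow_eq (ha : a ∈ Set.Ioo (0 : ℝ) 1) (n : ℝ) {x : ℝ}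
    (hx : x ∈ Set.Icc (0 : ℝ) 1) :
    x ^ (a * n) * (1 - x) ^ ((1 - a) * n) =
      a ^ (a * n) * (1 - a) ^ ((1 - a) * n) * binomialRelLikelihood a n x := by
  have ha' : 0 < 1 - a := sub_pos.2 ha.2
  have hx' : 0 ≤ 1 - x := sub_nonneg.2 hx.2
  have h_split {w t : ℝ} (hw : 0 < w) (ht : 0 ≤ t) :
      t ^ (w * n) = w ^ (w * n) * ((t / w) ^ w) ^ n := by
    rw [← rpow_mul (div_nonneg ht hw.le), ← mul_rpow hw.le (div_nonneg ht hw.le),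
      mul_div_cancel₀ _ hw.ne']
  rw [binomialRelLikelihood, Set.indicator_of_mem hx, bernoulliRelLikelihood,
    mul_rpow (rpow_nonneg (div_nonneg hx.1 ha.1.le) _) (rpow_nonneg (div_nonneg hx' ha'.le) _),
    h_split ha.1 hx.1, h_split ha' hx']
  ring

lemma integral_rpow_mul_one_sub_rpow_eq (ha : a ∈ Set.Ioo (0 : ℝ) 1) (n : ℝ) :
    ∫ t in (0 : ℝ)..1, t ^ (a * n) * (1 - t) ^ ((1 - a) * n) =
      a ^ (a * n) * (1 - a) ^ ((1 - a) * n) * ∫ t, binomialRelLikelihood a n t := by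
  rw [intervalIntegral.integral_of_le zero_le_one, ← integral_Icc_eq_integral_Ioc,
    setIntegral_congr_fun measurableSet_Icc fun _ ht => rpow_mul_one_sub_rpow_eq ha n ht,
    integral_const_mul, setIntegral_eq_integral_of_forall_compl_eq_zero]
  exact fun _ ht => Set.indicator_of_notMem ht _

lemma binomialPosterior_eq_div (ha : a ∈ Set.Ioo (0 : ℝ) 1) (n x : ℝ) :
    binomialPosterior a n x = binomialRelLikelihood a n x / ∫ t, binomialRelLikelihood a n t := by
  rw [binomialPosterior]
  split_ifs with hx
  · have h_mode : a ^ (a * n) * (1 - a) ^ ((1 - a) * n) ≠ 0 :=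
      (mul_pos (rpow_pos_of_pos ha.1 _) (rpow_pos_of_pos (sub_pos.2 ha.2) _)).ne'
    rw [rpow_mul_one_sub_rpow_eq ha n hx, integral_rpow_mul_one_sub_rpow_eq ha n,
      mul_div_mul_left _ _ h_mode]
  · rw [binomialRelLikelihood, Set.indicator_of_notMem hx, zero_div]

lemma measurable_binomialRelLikelihood (a n : ℝ) : Measurable (binomialRelLikelihood a n) :=
  ((measurable_bernoulliRelLikelihood a).pow_const n).indicator measurableSet_Icc

lemma two_mul_mul_one_sub_pos (ha : a ∈ Set.Ioo (0 : ℝ) 1) : 0 < 2 * a * (1 - a) :=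
  mul_pos (mul_pos two_pos ha.1) (sub_pos.2 ha.2)

lemma sq_posteriorScale (ha : a ∈ Set.Icc (0 : ℝ) 1) (hn : 0 ≤ n) :
    posteriorScale a n ^ 2 = n / (2 * a * (1 - a)) :=
  sq_sqrt <| div_nonneg hn <| mul_nonneg (mul_nonneg zero_le_two ha.1) (sub_nonneg.2 ha.2)

lemma tendsto_posteriorScale_atTop (ha : a ∈ Set.Ioo (0 : ℝ) 1) :
    Tendsto (posteriorScale a) atTop atTop :=
  tendsto_sqrt_atTop.comp <| tendsto_id.atTop_div_const <|
    two_mul_mul_one_sub_pos ha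

lemma norm_binomialRelLikelihood_le_exp (ha : a ∈ Set.Icc (0 : ℝ) 1) (hn : 0 ≤ n) (x : ℝ) :
    ‖binomialRelLikelihood a n x‖ ≤ exp (-n * (x - a) ^ 2) := by
  by_cases hx : x ∈ Set.Icc (0 : ℝ) 1
  · have h_nonneg := bernoulliRelLikelihood_nonneg ha hx
    rw [binomialRelLikelihood, Set.indicator_of_mem hx, norm_of_nonneg (rpow_nonneg h_nonneg n)]
    calc bernoulliRelLikelihood a x ^ n ≤ exp (-(x - a) ^ 2) ^ n :=
          rpow_le_rpow h_nonneg (bernoulliRelLikelihood_le_exp ha hx) hn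
      _ = exp (-n * (x - a) ^ 2) := by rw [← exp_mul, neg_mul_comm, mul_comm]
  · rw [binomialRelLikelihood, Set.indicator_of_notMem hx, norm_zero]
    exact (exp_pos _).le

lemma norm_binomialRelLikelihood_add_div_posteriorScale_le (ha : a ∈ Set.Ioo (0 : ℝ) 1)
    (hn : 0 < n) (u : ℝ) :
    ‖binomialRelLikelihood a n (a + u / posteriorScale a n)‖ ≤
      exp (-(2 * a * (1 - a)) * u ^ 2) := by
  refine (norm_binomialRelLikelihood_le_exp (Set.Ioo_subset_Icc_self ha) hn.le _).trans_eq ?_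
  rw [add_sub_cancel_left, div_pow, sq_posteriorScale (Set.Ioo_subset_Icc_self ha) hn.le]
  field_simp

lemma tendsto_binomialRelLikelihood_add_div_posteriorScale (ha : a ∈ Set.Ioo (0 : ℝ) 1) (u : ℝ) :
    Tendsto (fun n => binomialRelLikelihood a n (a + u / posteriorScale a n)) atTop
      (𝓝 (exp (-u ^ 2))) := by
  have h_scale := tendsto_posteriorScale_atTop ha
  have h_rate := (two_mul_mul_one_sub_pos ha).ne'
  have h_log := ((tendsto_sq_mul_log_bernoulliRelLikelihood ha u).comp h_scale).const_mul
    (2 * a * (1 - a))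
  rw [mul_neg, mul_div_cancel₀ _ h_rate] at h_log
  refine ((continuous_exp.tendsto _).comp h_log).congr' ?_
  filter_upwards [h_scale.eventually <| (tendsto_add_div_atTop a u).eventually <|
    Ioo_mem_nhds ha.1 ha.2, eventually_ge_atTop 0] with n h_mem hn
  rw [binomialRelLikelihood, Set.indicator_of_mem (Set.Ioo_subset_Icc_self h_mem),
    rpow_def_of_pos (bernoulliRelLikelihood_pos ha h_mem)]
  simp only [Function.comp_apply, sq_posteriorScale (Set.Ioo_subset_Icc_self ha) hn]
  rw [← mul_assoc, mul_div_cancel₀ _ h_rate, mul_comm]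

lemma setIntegral_binomialPosterior (ha : a ∈ Set.Ioo (0 : ℝ) 1) (hn : 0 < n) (S : Set ℝ) :
    ∫ x in {x | posteriorScale a n * (x - a) ∈ S}, binomialPosterior a n x =
      (∫ u in S, binomialRelLikelihood a n (a + u / posteriorScale a n)) /
        ∫ u, binomialRelLikelihood a n (a + u / posteriorScale a n) := by
  have h_scale : posteriorScale a n ≠ 0 :=
    (sqrt_pos.2 <| div_pos hn <| two_mul_mul_one_sub_pos ha).ne'
  simp only [binomialPosterior_eq_div ha, integral_div]
  exact setIntegral_div_integral_eq_comp_add_div h_scale a _ S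

end Binomial

theorem vonMises_binomial_uniform_prior_general {a : ℝ} (ha : a ∈ Set.Ioo (0 : ℝ) 1) (S : Set ℝ) :
    Tendsto (fun n => ∫ x in {x | posteriorScale a n * (x - a) ∈ S}, binomialPosterior a n x) atTop
      (𝓝 (1 / √π * ∫ u in S, exp (-u ^ 2))) := by
  have h_gaussian : ∫ u : ℝ, exp (-u ^ 2) = √π := by simpa using integral_gaussian 1
  have h_ratio := tendsto_setIntegral_div_integral_of_dominated (μ := volume)
    (F := fun n u => binomialRelLikelihood a n (a + u / posteriorScale a n))
    (fun u => exp (-(2 * a * (1 - a)) * u ^ 2))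
    (.of_forall fun n =>
      ((measurable_binomialRelLikelihood a n).comp (by fun_prop)).aestronglyMeasurable)
    ((eventually_gt_atTop 0).mono fun n hn =>
      ae_of_all _ (norm_binomialRelLikelihood_add_div_posteriorScale_le ha hn))
    (integrable_exp_neg_mul_sq (two_mul_mul_one_sub_pos ha))
    (ae_of_all _ (tendsto_binomialRelLikelihood_add_div_posteriorScale ha))
    (by rw [h_gaussian]; positivity) S
  rw [h_gaussian, div_eq_mul_one_div, mul_comm] at h_ratio
  refine h_ratio.congr' ?_
  filter_upwards [eventually_gt_atTop 0] with n hn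
  exact (setIntegral_binomialPosterior ha hn S).symm

/-- Von Mises's 1919 Bernstein–von Mises theorem for the binomial model with
uniform prior and constant relative frequency `a`: the rescaled posterior
distribution converges to the normal law with density `e^{−u²}/√π`. The
integration interval `(a + x₁/r_n, a + x₂/r_n)` (with possibly infinite
endpoints, `r_n = √(n/(2a(1−a)))`) is encoded as
`{x | x₁ < r_n(x−a) < x₂}` in `EReal`. -/
theorem vonMises_binomial_uniform_prior (a : ℝ) (ha : a ∈ Set.Ioo (0:ℝ) 1)
    (x₁ x₂ : EReal) (h12 : x₁ < x₂) :
    Tendsto (fun n : ℕ =>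
      ∫ x in {x : ℝ | x₁ < ((Real.sqrt ((n : ℝ) / (2 * a * (1 - a))) * (x - a) : ℝ) : EReal) ∧
                      ((Real.sqrt ((n : ℝ) / (2 * a * (1 - a))) * (x - a) : ℝ) : EReal) < x₂},
        (if x ∈ Set.Icc (0:ℝ) 1 then
          x ^ (a * (n : ℝ)) * (1 - x) ^ ((1 - a) * (n : ℝ)) /
            ∫ t in (0:ℝ)..1, t ^ (a * (n : ℝ)) * (1 - t) ^ ((1 - a) * (n : ℝ))
        else 0))
      atTop
      (nhds ((1 / Real.sqrt π) *
        ∫ u in {u : ℝ | x₁ < (u : EReal) ∧ (u : EReal) < x₂}, Real.exp (-u ^ 2))) :=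
  (vonMises_binomial_uniform_prior_general ha {u : ℝ | x₁ < (u : EReal) ∧ (u : EReal) < x₂}).comp
    tendsto_natCast_atTop_atTop
end

section
/- Let t ≥ 2, let a₁, …, a_t ∈ (0,1) with a₁ + ⋯ + a_t = 1, write a := (a₁, …, a_{t−1}) ∈ ℝ^{t−1}, and let Δ := {x ∈ ℝ^{t−1} : x_i > 0 for all i and x₁ + ⋯ + x_{t−1} < 1}. Define g on Δ by g(x) := ∏_{i=1}^{t−1} (x_i/a_i)^{a_i} · ((1 − x₁ − ⋯ − x_{t−1})/a_t)^{a_t} and g := 0 outside Δ. Let ψ : ℝ^{t−1} → [0,∞) be bounded, measurable, continuous at a, with ψ(a) > 0. Let H be the (t−1)×(t−1) matrix with entries h^{ij} = 1/(2a_t) for i ≠ j and h^{ii} = (1/2)(1/a_i + 1/a_t). Then for every z ∈ ℝ^{t−1}, (∫ over {x ∈ Δ : x_i ≤ a_i + z_i/√n for all i} of ψ(x) g(x)^n dx) / (∫_Δ ψ(x) g(x)^n dx) converges, as n → ∞, to (∫ over {y ∈ ℝ^{t−1} : y_i ≤ z_i for all i} of exp(−yᵀHy) dy) / (∫_{ℝ^{t−1}}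 exp(−yᵀHy) dy). -/
open MeasureTheory Filter Real

/-!
The posterior is proportional to `ψ * g ^ n`, so both integrals are treated by Laplace's method.
Each term `a * log (x / a)` of `log g` is at most `x - a - (√x - √a) ^ 2`; the linear parts cancel
because both probability vectors sum to one, so `log g ≤ -‖x - a‖ ^ 2 / 4` on the whole simplex
(the Kullback–Leibler divergence dominates the squared Hellinger distance). After the substitution
`x = a + y / √n` this is an integrable bound that does not depend on `n`, while the second-order
expansion of `log` gives `g ^ n → exp (-yᵀHy)` pointwise. Near `a`, where `ψ` is bounded, dominated
convergence applies; away from `a`, the factor `√n ^ (t - 1) * exp (-c * n)` beats the integral of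
`ψ`. The Jacobians cancel in the quotient.
-/

section Laplace

open Module Topology
open scoped Pointwise

theorem tendsto_sqrt_pow_mul_exp_neg_mul (d : ℕ) {c : ℝ} (hc : 0 < c) :
    Tendsto (fun n : ℕ => √n ^ d * exp (-c * n)) atTop (𝓝 0) := by
  refine ((tendsto_rpow_mul_exp_neg_mul_atTop_nhds_zero (d / 2) c hc).comp
    tendsto_natCast_atTop_atTop).congr fun n => ?_
  rw [Function.comp_apply, rpow_div_two_eq_sqrt _ n.cast_nonneg, rpow_natCast]

variable {E F : Type*} [NormedAddCommGroup E] [NormedSpace ℝ E] [NormedAddCommGroup F]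
  [NormedSpace ℝ F]

theorem tendsto_add_inv_sqrt_smul (p y : E) :
    Tendsto (fun n : ℕ => p + (√n)⁻¹ • y) atTop (𝓝 p) := by
  have inv_sqrt : Tendsto (fun n : ℕ => (√n)⁻¹) atTop (𝓝 0) :=
    tendsto_inv_atTop_zero.comp (tendsto_sqrt_atTop.comp tendsto_natCast_atTop_atTop)
  simpa using (inv_sqrt.smul_const y).const_add p

variable [MeasurableSpace E]

/-- The hypotheses of Laplace's method at scale `1 / √n`: `g` is maximal at `p`, decays at least
like a Gaussian on the whole space, and its powers have the rescaled limit `φ`. A likelihood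
restricted to a parameter domain is encoded by letting `g` vanish outside of it. -/
structure IsGaussianPeak (g : E → ℝ) (p : E) (φ : E → ℝ) : Prop where
  measurable : Measurable g
  nonneg : ∀ x, 0 ≤ g x
  exists_le_exp : ∃ c > 0, ∀ x, g x ≤ exp (-c * ‖x - p‖ ^ 2)
  tendsto_pow : ∀ y, Tendsto (fun n : ℕ => g (p + (√n)⁻¹ • y) ^ n) atTop (𝓝 (φ y))

namespace IsGaussianPeak

variable {g φ : E → ℝ} {p : E} {f : E → F} {μ : Measure E}

theorem exists_pow_le_exp (hg : IsGaussianPeak g p φ) :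
    ∃ c > 0, ∀ (n : ℕ) (x : E), g x ^ n ≤ exp (-c * ‖x - p‖ ^ 2 * n) := by
  obtain ⟨c, hc, hle⟩ := hg.exists_le_exp
  refine ⟨c, hc, fun n x => ?_⟩
  rw [mul_comm, exp_nat_mul]
  exact pow_le_pow_left₀ (hg.nonneg x) (hle x) n

theorem exists_pow_comp_le_exp (hg : IsGaussianPeak g p φ) :
    ∃ c > 0, ∀ n : ℕ, 0 < n → ∀ y, g (p + (√n)⁻¹ • y) ^ n ≤ exp (-c * ‖y‖ ^ 2) := by
  obtain ⟨c, hc, hle⟩ := hg.exists_pow_le_exp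
  refine ⟨c, hc, fun n hn y => (hle n _).trans_eq ?_⟩
  have hn' : (0 : ℝ) < n := Nat.cast_pos.2 hn
  rw [add_sub_cancel_left, norm_smul, mul_pow, norm_eq_abs, sq_abs, inv_pow, sq_sqrt hn'.le]
  field_simp

theorem integrable_pow_smul (hg : IsGaussianPeak g p φ) (hf : Integrable f μ) (n : ℕ) :
    Integrable (fun x => g x ^ n • f x) μ := by
  obtain ⟨c, hc, hle⟩ := hg.exists_pow_le_exp
  refine hf.bdd_smul 1 (hg.measurable.pow_const n).aestronglyMeasurable (ae_of_all μ fun x => ?_)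
  rw [norm_of_nonneg (pow_nonneg (hg.nonneg x) n)]
  refine (hle n x).trans (exp_le_one_iff.2 ?_)
  rw [neg_mul, neg_mul, neg_nonpos]
  positivity

theorem tendsto_setIntegral_of_eventuallyEq_zero (hg : IsGaussianPeak g p φ) (hf : Integrable f μ)
    (hzero : f =ᶠ[𝓝 p] 0) (A : ℕ → Set E) (d : ℕ) :
    Tendsto (fun n : ℕ => √n ^ d • ∫ x in A n, g x ^ n • f x ∂μ) atTop (𝓝 0) := by
  obtain ⟨c, hc, hle⟩ := hg.exists_pow_le_exp
  obtain ⟨ε, hε, hball⟩ := Metric.eventually_nhds_iff.1 hzero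
  have pointwise (n : ℕ) (x : E) : ‖g x ^ n • f x‖ ≤ exp (-(c * ε ^ 2) * n) * ‖f x‖ := by
    rw [norm_smul, norm_of_nonneg (pow_nonneg (hg.nonneg x) n)]
    rcases lt_or_ge (dist x p) ε with near | far
    · simp [hball near]
    · gcongr
      refine (hle n x).trans (exp_le_exp.2 ?_)
      rw [dist_eq_norm] at far
      rw [neg_mul c]
      gcongr
  have tail := (tendsto_sqrt_pow_mul_exp_neg_mul d (c := c * ε ^ 2) (by positivity)).mul_const
    (∫ x, ‖f x‖ ∂μ)
  rw [zero_mul] at tail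
  refine squeeze_zero_norm (fun n => ?_) tail
  rw [norm_smul, norm_of_nonneg (by positivity), mul_assoc, ← integral_const_mul]
  gcongr
  calc ‖∫ x in A n, g x ^ n • f x ∂μ‖
      ≤ ∫ x in A n, exp (-(c * ε ^ 2) * n) * ‖f x‖ ∂μ :=
        norm_integral_le_of_norm_le (hf.norm.const_mul _).integrableOn (ae_of_all _ (pointwise n))
    _ ≤ ∫ x, exp (-(c * ε ^ 2) * n) * ‖f x‖ ∂μ :=
        setIntegral_le_integral (hf.norm.const_mul _) (ae_of_all _ fun x => by positivity)

end IsGaussianPeak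

variable [FiniteDimensional ℝ E] [BorelSpace E] {μ : Measure E} [μ.IsAddHaarMeasure]

theorem integrable_exp_neg_mul_norm_sq_s13 {c : ℝ} (hc : 0 < c) :
    Integrable (fun y : E => exp (-c * ‖y‖ ^ 2)) μ := by
  cases subsingleton_or_nontrivial E with
  | inl _ => exact Integrable.of_finite
  | inr _ =>
    refine (integrable_fun_norm_addHaar μ (f := fun r => exp (-c * r ^ 2))).2 ?_
    simpa only [rpow_natCast, smul_eq_mul] using
      integrableOn_rpow_mul_exp_neg_mul_sq hc (s := (finrank ℝ E - 1 : ℕ))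
        (neg_one_lt_zero.trans_le (Nat.cast_nonneg _))

theorem setIntegral_comp_add_inv_smul (f : E → F) (p : E) (S : Set E) {r : ℝ} (hr : 0 < r) :
    ∫ y in S, f (p + r⁻¹ • y) ∂μ
      = r ^ finrank ℝ E • ∫ x in {x | r • (x - p) ∈ S}, f x ∂μ := by
  have translate : r⁻¹ • S = (p + ·) ⁻¹' {x | r • (x - p) ∈ S} := by
    ext x
    simp [Set.mem_inv_smul_set_iff₀ hr.ne']
  rw [Measure.setIntegral_comp_smul_of_pos μ (fun x => f (p + x)) S (inv_pos.2 hr), inv_pow,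
    inv_inv, translate, (measurePreserving_add_left μ p).setIntegral_preimage_emb
      (measurableEmbedding_addLeft p)]

namespace IsGaussianPeak

variable {g φ : E → ℝ} {p : E} {f : E → F}

theorem integrable_profile (hg : IsGaussianPeak g p φ) : Integrable φ μ := by
  obtain ⟨c, hc, hle⟩ := hg.exists_pow_comp_le_exp
  have φ_nonneg (y : E) : 0 ≤ φ y :=
    ge_of_tendsto' (hg.tendsto_pow y) fun n => pow_nonneg (hg.nonneg _) n
  have φ_le (y : E) : φ y ≤ exp (-c * ‖y‖ ^ 2) :=
    le_of_tendsto (hg.tendsto_pow y) ((eventually_gt_atTop 0).mono fun n hn => hle n hn y)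
  have φ_measurable : AEStronglyMeasurable φ μ :=
    aestronglyMeasurable_of_tendsto_ae atTop
      (fun n => ((hg.measurable.comp (by fun_prop)).pow_const n).aestronglyMeasurable)
      (ae_of_all μ hg.tendsto_pow)
  exact (integrable_exp_neg_mul_norm_sq_s13 hc).mono' φ_measurable
    (ae_of_all μ fun y => (norm_of_nonneg (φ_nonneg y)).trans_le (φ_le y))

theorem tendsto_setIntegral_comp_of_bounded (hg : IsGaussianPeak g p φ) (hf : Integrable f μ)
    (hcont : ContinuousAt f p) {M : ℝ} (hM : ∀ x, ‖f x‖ ≤ M) (S : Set E) :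
    Tendsto (fun n : ℕ => ∫ y in S, g (p + (√n)⁻¹ • y) ^ n • f (p + (√n)⁻¹ • y) ∂μ) atTop
      (𝓝 (∫ y in S, φ y • f p ∂μ)) := by
  obtain ⟨c, hc, hle⟩ := hg.exists_pow_comp_le_exp
  refine tendsto_integral_filter_of_dominated_convergence (fun y => exp (-c * ‖y‖ ^ 2) * M) ?_ ?_
    ((integrable_exp_neg_mul_norm_sq_s13 hc).mul_const M).integrableOn ?_
  · filter_upwards [eventually_gt_atTop 0] with n hn
    have scale_ne : (√n)⁻¹ ≠ 0 := by positivity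
    exact (((hg.integrable_pow_smul hf n).comp_add_left p).comp_smul
      scale_ne).aestronglyMeasurable.restrict
  · filter_upwards [eventually_gt_atTop 0] with n hn
    refine ae_of_all _ fun y => ?_
    rw [norm_smul, norm_of_nonneg (pow_nonneg (hg.nonneg _) n)]
    exact mul_le_mul (hle n hn y) (hM _) (norm_nonneg _) (exp_nonneg _)
  · exact ae_of_all _ fun y =>
      (hg.tendsto_pow y).smul (hcont.tendsto.comp (tendsto_add_inv_sqrt_smul p y))

theorem tendsto_setIntegral (hg : IsGaussianPeak g p φ) (hf : Integrable f μ)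
    (hcont : ContinuousAt f p) (S : Set E) :
    Tendsto (fun n : ℕ => √n ^ finrank ℝ E • ∫ x in {x | √n • (x - p) ∈ S}, g x ^ n • f x ∂μ)
      atTop (𝓝 (∫ y in S, φ y • f p ∂μ)) := by
  obtain ⟨ε, hε, hball⟩ := Metric.continuousAt_iff.1 hcont 1 one_pos
  set U := Metric.ball p ε
  have U_mem : U ∈ 𝓝 p := Metric.ball_mem_nhds p hε
  have near_eq : U.indicator f =ᶠ[𝓝 p] f := Set.EqOn.eventuallyEq_of_mem Set.eqOn_indicator U_mem
  have far_eq : Uᶜ.indicator f =ᶠ[𝓝 p] 0 := by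
    filter_upwards [U_mem] with x hx using Set.indicator_of_notMem (Set.notMem_compl_iff.2 hx) f
  have near_le (x : E) : ‖U.indicator f x‖ ≤ ‖f p‖ + 1 := by
    by_cases hx : x ∈ U
    · rw [Set.indicator_of_mem hx]
      exact norm_le_norm_add_const_of_dist_le (hball hx).le
    · rw [Set.indicator_of_notMem hx, norm_zero]
      positivity
  have near_int : Integrable (U.indicator f) μ := hf.indicator measurableSet_ball
  have far_int : Integrable (Uᶜ.indicator f) μ := hf.indicator measurableSet_ball.compl
  have near := hg.tendsto_setIntegral_comp_of_bounded near_int (hcont.congr near_eq.symm) near_le S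
  have far := hg.tendsto_setIntegral_of_eventuallyEq_zero far_int far_eq
    (fun n : ℕ => {x | √n • (x - p) ∈ S}) (finrank ℝ E)
  rw [near_eq.eq_of_nhds] at near
  have total := near.add far
  rw [add_zero] at total
  refine total.congr' ?_
  filter_upwards [eventually_gt_atTop 0] with n hn
  rw [setIntegral_comp_add_inv_smul (fun x => g x ^ n • U.indicator f x) p S (by positivity),
    ← smul_add, ← integral_add (hg.integrable_pow_smul near_int n).integrableOn
      (hg.integrable_pow_smul far_int n).integrableOn]
  simp only [← smul_add, Set.indicator_self_add_compl_apply]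

end IsGaussianPeak

end Laplace

section LogBounds

open Asymptotics Topology

theorem sq_sub_le_mul_sq_sqrt_sub_sqrt {x y : ℝ} (hx : 0 ≤ x) (hy : 0 ≤ y) :
    (x - y) ^ 2 ≤ 2 * (x + y) * (√x - √y) ^ 2 := by
  calc (x - y) ^ 2 = (√x + √y) ^ 2 * (√x - √y) ^ 2 := by
        rw [← mul_pow, ← sq_sub_sq, sq_sqrt hx, sq_sqrt hy]
    _ ≤ 2 * (√x ^ 2 + √y ^ 2) * (√x - √y) ^ 2 := by gcongr; exact add_sq_le
    _ = 2 * (x + y) * (√x - √y) ^ 2 := by rw [sq_sqrt hx, sq_sqrt hy]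

theorem mul_log_div_le_sub_sub_sq_sqrt {x a : ℝ} (hx : 0 < x) (ha : 0 < a) :
    a * log (x / a) ≤ x - a - (√x - √a) ^ 2 := by
  have sqrt_pos : 0 < √x / √a := div_pos (sqrt_pos.2 hx) (sqrt_pos.2 ha)
  calc a * log (x / a) = 2 * a * log (√x / √a) := by
        rw [← sqrt_div hx.le, log_sqrt (by positivity)]; ring
    _ ≤ 2 * a * (√x / √a - 1) := by gcongr; exact log_le_sub_one_of_pos sqrt_pos
    _ = 2 * √x * √a - 2 * a := by
        rw [mul_sub, mul_one]
        congr 1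
        nth_rw 1 [← sq_sqrt ha.le]
        field_simp
    _ = x - a - (√x - √a) ^ 2 := by linear_combination sq_sqrt hx.le + sq_sqrt ha.le

theorem isBigO_log_one_add_sub :
    (fun u : ℝ => log (1 + u) - (u - u ^ 2 / 2)) =O[𝓝 0] fun u => u ^ 3 := by
  refine IsBigO.of_bound 2 ?_
  filter_upwards [Metric.ball_mem_nhds (0 : ℝ) one_half_pos] with u hu
  rw [mem_ball_zero_iff, norm_eq_abs] at hu
  have taylor := abs_log_sub_add_sum_range_le (x := -u) (by rw [abs_neg]; linarith) 2
  rw [abs_neg, sub_neg_eq_add] at taylor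
  calc ‖log (1 + u) - (u - u ^ 2 / 2)‖ ≤ |u| ^ 3 / (1 - |u|) := by
        refine (congrArg abs ?_).trans_le taylor
        simp only [Finset.sum_range_succ, Finset.sum_range_zero]
        push_cast
        ring
    _ ≤ |u| ^ 3 / (1 / 2) := by gcongr; linarith
    _ = 2 * ‖u ^ 3‖ := by rw [norm_pow, norm_eq_abs]; ring

theorem tendsto_nat_mul_log_div {a : ℝ} (ha : a ≠ 0) (v : ℝ) :
    Tendsto (fun n : ℕ => n * (a * log ((a + (√n)⁻¹ * v) / a) - (√n)⁻¹ * v)) atTop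
      (𝓝 (-(v ^ 2 / (2 * a)))) := by
  set u : ℕ → ℝ := fun n => (√n)⁻¹ * (v / a) with hu
  have u_tendsto : Tendsto u atTop (𝓝 0) := by
    simpa only [zero_add, smul_eq_mul] using tendsto_add_inv_sqrt_smul (0 : ℝ) (v / a)
  have u_sq : ∀ᶠ n : ℕ in atTop, n * u n ^ 2 = (v / a) ^ 2 := by
    filter_upwards [eventually_gt_atTop 0] with n hn
    rw [hu, mul_pow, inv_pow, sq_sqrt n.cast_nonneg, mul_inv_cancel_left₀ (by positivity)]
  have remainder :
      Tendsto (fun n : ℕ => n * (log (1 + u n) - (u n - u n ^ 2 / 2))) atTop (𝓝 0) := by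
    have cubic : Tendsto (fun n : ℕ => n * u n ^ 3) atTop (𝓝 0) := by
      have := u_tendsto.const_mul ((v / a) ^ 2)
      rw [mul_zero] at this
      refine this.congr' ?_
      filter_upwards [u_sq] with n hn
      rw [← hn]; ring
    exact ((isBigO_refl (fun n : ℕ => (n : ℝ)) atTop).mul
      (isBigO_log_one_add_sub.comp_tendsto u_tendsto)).trans_tendsto cubic
  have expansion := (remainder.const_mul a).sub_const (v ^ 2 / (2 * a))
  rw [mul_zero, zero_sub] at expansion
  refine expansion.congr' ?_
  filter_upwards [u_sq] with n hn
  have ratio : (a + (√n)⁻¹ * v) / a = 1 + u n := by rw [hu]; field_simp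
  have linear : (√n)⁻¹ * v = a * u n := by rw [hu]; field_simp
  have quadratic : v ^ 2 / (2 * a) = a * (n * u n ^ 2) / 2 := by rw [hn]; field_simp
  rw [ratio, linear, quadratic]
  ring

end LogBounds

section Multinomial

open Module Topology

variable {ι : Type*}

theorem smul_sub_mem_Iic_iff {r : ℝ} (hr : 0 < r) (p x z : ι → ℝ) :
    r • (x - p) ∈ Set.Iic z ↔ ∀ i, x i ≤ p i + z i / r := by
  simp only [Set.mem_Iic, Pi.le_def, Pi.smul_apply, Pi.sub_apply, smul_eq_mul,
    ← sub_le_iff_le_add', le_div_iff₀' hr]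

variable [Fintype ι] {p x : ι → ℝ} {b : ℝ}

variable (ι) in
/-- Von Mises's domain `Δ`: the open simplex of probability vectors with positive entries, in the
coordinates obtained by dropping the last entry `1 - ∑ i, x i`. -/
def cornerSimplex : Set (ι → ℝ) := {x | (∀ i, 0 < x i) ∧ ∑ i, x i < 1}

theorem isOpen_cornerSimplex : IsOpen (cornerSimplex ι) := by
  have positive : IsOpen {x : ι → ℝ | ∀ i, 0 < x i} := by
    simp only [Set.ofPred_forall]
    exact isOpen_iInter_of_finite fun i => isOpen_lt continuous_const (continuous_apply i)
  have sum_lt_one : IsOpen {x : ι → ℝ | ∑ i, x i < 1} := isOpen_lt (by fun_prop) continuous_const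
  exact positive.inter sum_lt_one

theorem cornerSimplex_subset_Icc : cornerSimplex ι ⊆ Set.Icc 0 1 := fun _ hx =>
  ⟨fun i => (hx.1 i).le, fun i =>
    (Finset.single_le_sum (fun j _ => (hx.1 j).le) (Finset.mem_univ i)).trans hx.2.le⟩

theorem mem_cornerSimplex_of_sum_add_eq_one (hp : ∀ i, 0 < p i) (hb : 0 < b)
    (hsum : ∑ i, p i + b = 1) : p ∈ cornerSimplex ι :=
  ⟨hp, by linarith⟩

theorem volume_cornerSimplex_ne_top : volume (cornerSimplex ι) ≠ ⊤ :=
  measure_ne_top_of_subset cornerSimplex_subset_Icc isCompact_Icc.measure_ne_top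

/-- Von Mises's function `g`: the likelihood ratio per trial of the parameter `x` against `p`, when
the relative frequencies are `p` and, for the dropped category, `b`. It is the likelihood only on
`cornerSimplex ι`; elsewhere real powers of negative numbers give it irrelevant values. -/
noncomputable def relLikelihood (p : ι → ℝ) (b : ℝ) (x : ι → ℝ) : ℝ :=
  (∏ i, (x i / p i) ^ p i) * ((1 - ∑ i, x i) / b) ^ b

/-- The logarithm of `relLikelihood` on the simplex: minus the Kullback–Leibler divergence of the
parameter `x` from the relative frequencies. -/
noncomputable def relLogLikelihood (p : ι → ℝ) (b : ℝ) (x : ι → ℝ) : ℝ :=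
  ∑ i, p i * log (x i / p i) + b * log ((1 - ∑ i, x i) / b)

/-- Von Mises's quadratic form `yᵀHy`, half the Fisher information form at `p`, with `b` the
probability of the dropped category. -/
noncomputable def vonMisesForm [DecidableEq ι] (p : ι → ℝ) (b : ℝ) (y : ι → ℝ) : ℝ :=
  ∑ i, ∑ j, y i * (if i = j then (1 / 2) * (1 / p i + 1 / b) else 1 / (2 * b)) * y j

theorem vonMisesForm_eq_sum_sq_add_sq_sum [DecidableEq ι] (p : ι → ℝ) (b : ℝ) (y : ι → ℝ) :
    vonMisesForm p b y = ∑ i, y i ^ 2 / (2 * p i) + (∑ i, y i) ^ 2 / (2 * b) := by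
  have entry (i j : ι) : y i * (if i = j then (1 / 2) * (1 / p i + 1 / b) else 1 / (2 * b)) * y j
      = (if i = j then y i ^ 2 / (2 * p i) else 0) + y i * y j / (2 * b) := by
    split_ifs with h
    · subst h; ring
    · ring
  simp only [vonMisesForm, entry, Finset.sum_add_distrib, Finset.sum_ite_eq, Finset.mem_univ,
    if_true, sq (∑ i, y i), Finset.sum_mul_sum, Finset.sum_div]

theorem measurable_relLikelihood (p : ι → ℝ) (b : ℝ) : Measurable (relLikelihood p b) := by
  unfold relLikelihood
  fun_prop

theorem relLikelihood_eq_exp (hp : ∀ i, 0 < p i) (hb : 0 < b) (hx : x ∈ cornerSimplex ι) :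
    relLikelihood p b x = exp (relLogLikelihood p b x) := by
  have last_pos : 0 < (1 - ∑ i, x i) / b := div_pos (sub_pos.2 hx.2) hb
  simp only [relLikelihood, relLogLikelihood, exp_add, exp_sum, rpow_def_of_pos last_pos,
    rpow_def_of_pos (div_pos (hx.1 _) (hp _)), mul_comm]

theorem norm_sq_le_sum_sq (y : ι → ℝ) : ‖y‖ ^ 2 ≤ ∑ i, y i ^ 2 := by
  refine (le_sqrt (norm_nonneg y) (by positivity)).1 ?_
  exact (pi_norm_le_iff_of_nonneg (sqrt_nonneg _)).2 fun i =>
    abs_le_sqrt (Finset.single_le_sum (fun j _ => sq_nonneg (y j)) (Finset.mem_univ i))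

theorem relLogLikelihood_le (hp : ∀ i, 0 < p i) (hb : 0 < b) (hsum : ∑ i, p i + b = 1)
    (hx : x ∈ cornerSimplex ι) : relLogLikelihood p b x ≤ -(1 / 4) * ‖x - p‖ ^ 2 := by
  have coordinate (i : ι) : p i * log (x i / p i) ≤ x i - p i - 1 / 4 * (x - p) i ^ 2 := by
    have hellinger := sq_sub_le_mul_sq_sqrt_sub_sqrt (hx.1 i).le (hp i).le
    have x_le_one : x i ≤ 1 := (cornerSimplex_subset_Icc hx).2 i
    have p_le_one : p i ≤ 1 :=
      (cornerSimplex_subset_Icc (mem_cornerSimplex_of_sum_add_eq_one hp hb hsum)).2 i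
    have : 2 * (x i + p i) * (√(x i) - √(p i)) ^ 2 ≤ 2 * (1 + 1) * (√(x i) - √(p i)) ^ 2 := by
      gcongr
    rw [Pi.sub_apply]
    linarith [mul_log_div_le_sub_sub_sq_sqrt (hx.1 i) (hp i)]
  have last : b * log ((1 - ∑ i, x i) / b) ≤ (1 - ∑ i, x i) - b :=
    (mul_log_div_le_sub_sub_sq_sqrt (sub_pos.2 hx.2) hb).trans (sub_le_self _ (sq_nonneg _))
  calc relLogLikelihood p b x
      ≤ ∑ i, (x i - p i - 1 / 4 * (x - p) i ^ 2) + ((1 - ∑ i, x i) - b) :=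
        add_le_add (Finset.sum_le_sum fun i _ => coordinate i) last
    _ = -(1 / 4) * ∑ i, (x - p) i ^ 2 := by
        rw [Finset.sum_sub_distrib, Finset.sum_sub_distrib, ← Finset.mul_sum]
        linear_combination -hsum
    _ ≤ -(1 / 4) * ‖x - p‖ ^ 2 := by
        linarith [norm_sq_le_sum_sq (x - p)]

theorem tendsto_nat_mul_relLogLikelihood [DecidableEq ι] (hp : ∀ i, p i ≠ 0) (hb : b ≠ 0)
    (hsum : ∑ i, p i + b = 1) (y : ι → ℝ) :
    Tendsto (fun n : ℕ => n * relLogLikelihood p b (p + (√n)⁻¹ • y)) atTop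
      (𝓝 (-vonMisesForm p b y)) := by
  have terms := (tendsto_finsetSum Finset.univ fun i _ => tendsto_nat_mul_log_div (hp i) (y i)).add
    (tendsto_nat_mul_log_div hb (-∑ i, y i))
  have limit :
      ∑ i, -(y i ^ 2 / (2 * p i)) + -((-∑ i, y i) ^ 2 / (2 * b)) = -vonMisesForm p b y := by
    rw [vonMisesForm_eq_sum_sq_add_sq_sum, Finset.sum_neg_distrib, neg_sq, neg_add]
  rw [limit] at terms
  refine terms.congr fun n => ?_
  have last : 1 - ∑ i, (p i + (√n)⁻¹ * y i) = b + (√n)⁻¹ * -∑ i, y i := by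
    rw [Finset.sum_add_distrib, ← Finset.mul_sum]
    linear_combination -hsum
  simp only [relLogLikelihood, Pi.add_apply, Pi.smul_apply, smul_eq_mul, last]
  rw [← Finset.mul_sum, Finset.sum_sub_distrib, ← Finset.mul_sum]
  ring

theorem isGaussianPeak_relLikelihood [DecidableEq ι] (hp : ∀ i, 0 < p i) (hb : 0 < b)
    (hsum : ∑ i, p i + b = 1) :
    IsGaussianPeak ((cornerSimplex ι).indicator (relLikelihood p b)) p
      fun y => exp (-vonMisesForm p b y) := by
  have hp_mem := mem_cornerSimplex_of_sum_add_eq_one hp hb hsum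
  refine ⟨(measurable_relLikelihood p b).indicator isOpen_cornerSimplex.measurableSet,
    fun x => Set.indicator_apply_nonneg fun hx => ?_,
    ⟨1 / 4, by norm_num, fun x => ?_⟩, fun y => ?_⟩
  · rw [relLikelihood_eq_exp hp hb hx]
    positivity
  · refine Set.indicator_apply_le' (fun hx => ?_) fun _ => ?_
    · rw [relLikelihood_eq_exp hp hb hx]
      exact exp_le_exp.2 (relLogLikelihood_le hp hb hsum hx)
    · positivity
  · refine ((continuous_exp.tendsto _).comp
      (tendsto_nat_mul_relLogLikelihood (fun i => (hp i).ne') hb.ne' hsum y)).congr' ?_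
    filter_upwards [(tendsto_add_inv_sqrt_smul p y).eventually_mem
      (isOpen_cornerSimplex.mem_nhds hp_mem)] with n hn
    rw [Function.comp_apply, Set.indicator_of_mem hn, relLikelihood_eq_exp hp hb hn, exp_nat_mul]

theorem tendsto_setIntegral_mul_relLikelihood_pow [DecidableEq ι] (hp : ∀ i, 0 < p i) (hb : 0 < b)
    (hsum : ∑ i, p i + b = 1) {ψ : (ι → ℝ) → ℝ} (hψ_int : IntegrableOn ψ (cornerSimplex ι))
    (hψ_cont : ContinuousAt ψ p) (S : Set (ι → ℝ)) :
    Tendsto (fun n : ℕ => √n ^ Fintype.card ι *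
        ∫ x in {x ∈ cornerSimplex ι | √n • (x - p) ∈ S}, ψ x * relLikelihood p b x ^ n) atTop
      (𝓝 (ψ p * ∫ y in S, exp (-vonMisesForm p b y))) := by
  have simplex_meas : MeasurableSet (cornerSimplex ι) := isOpen_cornerSimplex.measurableSet
  have ψ_eq : (cornerSimplex ι).indicator ψ =ᶠ[𝓝 p] ψ :=
    Set.eqOn_indicator.eventuallyEq_of_mem
      (isOpen_cornerSimplex.mem_nhds (mem_cornerSimplex_of_sum_add_eq_one hp hb hsum))
  have laplace := (isGaussianPeak_relLikelihood hp hb hsum).tendsto_setIntegral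
    ((integrable_indicator_iff simplex_meas).2 hψ_int) (hψ_cont.congr ψ_eq.symm) S
  simp only [smul_eq_mul, integral_mul_const, ψ_eq.eq_of_nhds,
    finrank_fintype_fun_eq_card] at laplace
  rw [mul_comm (ψ p)]
  refine laplace.congr fun n => ?_
  have domain : {x ∈ cornerSimplex ι | √n • (x - p) ∈ S}
      = {x | √n • (x - p) ∈ S} ∩ cornerSimplex ι := Set.inter_comm _ _
  rw [domain, ← setIntegral_indicator simplex_meas]
  congr 2 with x
  by_cases hx : x ∈ cornerSimplex ι
  · simp only [Set.indicator_of_mem hx, mul_comm]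
  · simp only [Set.indicator_of_notMem hx, mul_zero]

theorem vonMises_multinomial_general [DecidableEq ι] (hp : ∀ i, 0 < p i) (hb : 0 < b)
    (hsum : ∑ i, p i + b = 1) {ψ : (ι → ℝ) → ℝ} (hψ_int : IntegrableOn ψ (cornerSimplex ι))
    (hψ_cont : ContinuousAt ψ p) (hψ_ne : ψ p ≠ 0) (S : Set (ι → ℝ)) :
    Tendsto (fun n : ℕ =>
        (∫ x in {x ∈ cornerSimplex ι | √n • (x - p) ∈ S}, ψ x * relLikelihood p b x ^ n) /
          ∫ x in cornerSimplex ι, ψ x * relLikelihood p b x ^ n) atTop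
      (𝓝 ((∫ y in S, exp (-vonMisesForm p b y)) / ∫ y, exp (-vonMisesForm p b y))) := by
  have mass_pos : 0 < ∫ y, exp (-vonMisesForm p b y) :=
    integral_exp_pos (isGaussianPeak_relLikelihood hp hb hsum).integrable_profile
  have numerator := tendsto_setIntegral_mul_relLikelihood_pow hp hb hsum hψ_int hψ_cont S
  have evidence := tendsto_setIntegral_mul_relLikelihood_pow hp hb hsum hψ_int hψ_cont Set.univ
  simp only [Set.mem_univ, and_true, Set.ofPred_mem_eq, setIntegral_univ] at evidence
  have ratio := numerator.div evidence (mul_ne_zero hψ_ne mass_pos.ne')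
  rw [mul_div_mul_left _ _ hψ_ne] at ratio
  refine ratio.congr' ?_
  filter_upwards [eventually_gt_atTop 0] with n hn
  exact mul_div_mul_left _ _ (by positivity)

end Multinomial

/-- Von Mises's 1919 Bernstein–von Mises theorem for the multinomial model with
`t = m + 1 ≥ 2` categories, constant relative frequencies `a₁, …, a_t` and prior
density `ψ`: the posterior of `(x₁, …, x_{t−1})`, centered at `a = (a₁, …, a_{t−1})`
and scaled by `√n`, converges to the normal law with density proportional to
`exp(−yᵀHy)`, where `h^{ij} = 1/(2a_t)` for `i ≠ j` and
`h^{ii} = (1/2)(1/a_i + 1/a_t)`. -/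
theorem vonMises_multinomial (m : ℕ) (hm : 1 ≤ m)
    (a : Fin (m + 1) → ℝ) (ha : ∀ i, a i ∈ Set.Ioo (0:ℝ) 1) (hsum : ∑ i, a i = 1)
    (ψ : (Fin m → ℝ) → ℝ) (hψ_meas : Measurable ψ)
    (hψ_nonneg : ∀ x, 0 ≤ ψ x) (hψ_bdd : ∃ B, ∀ x, ψ x ≤ B)
    (hψ_cont : ContinuousAt ψ (fun i => a i.castSucc))
    (hψ_pos : 0 < ψ (fun i => a i.castSucc))
    (z : Fin m → ℝ) :
    Tendsto (fun n : ℕ =>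
      (∫ x in {x : Fin m → ℝ | ((∀ i, 0 < x i) ∧ ∑ i, x i < 1) ∧
            ∀ i, x i ≤ a i.castSucc + z i / Real.sqrt n},
          ψ x * ((∏ i : Fin m, (x i / a i.castSucc) ^ (a i.castSucc)) *
            ((1 - ∑ i, x i) / a (Fin.last m)) ^ (a (Fin.last m))) ^ n) /
      (∫ x in {x : Fin m → ℝ | (∀ i, 0 < x i) ∧ ∑ i, x i < 1},
          ψ x * ((∏ i : Fin m, (x i / a i.castSucc) ^ (a i.castSucc)) *
            ((1 - ∑ i, x i) / a (Fin.last m)) ^ (a (Fin.last m))) ^ n))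
      atTop
      (nhds
        ((∫ y in {y : Fin m → ℝ | ∀ i, y i ≤ z i},
            Real.exp (-(∑ i, ∑ j, y i *
              (if i = j then (1/2) * (1 / a i.castSucc + 1 / a (Fin.last m))
               else 1 / (2 * a (Fin.last m))) * y j))) /
         (∫ y : Fin m → ℝ,
            Real.exp (-(∑ i, ∑ j, y i *
              (if i = j then (1/2) * (1 / a i.castSucc + 1 / a (Fin.last m))
               else 1 / (2 * a (Fin.last m))) * y j))))) := by
  obtain ⟨B, hB⟩ := hψ_bdd
  have ψ_int : IntegrableOn ψ (cornerSimplex (Fin m)) :=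
    Measure.integrableOn_of_bounded volume_cornerSimplex_ne_top hψ_meas.aestronglyMeasurable
      (ae_of_all _ fun x => (norm_of_nonneg (hψ_nonneg x)).trans_le (hB x))
  have posterior := vonMises_multinomial_general (fun i => (ha i.castSucc).1) (ha (Fin.last m)).1
    ((Fin.sum_univ_castSucc a).symm.trans hsum) ψ_int hψ_cont hψ_pos.ne' (Set.Iic z)
  refine posterior.congr' ?_
  filter_upwards [eventually_gt_atTop 0] with n hn
  simp only [smul_sub_mem_Iic_iff (show 0 < √n by positivity)]
  rfl
end

section
/- Let t ≥ 1, let a ∈ ℝ^t, let H be a positive definite t×t real matrix, and let f : ℝ^t → [0,1] be a measurable, integrable function with f(a) = 1, with f(a+h) = 1 − hᵀHh + o(|h|²) as h → 0, and such that for every δ > 0 one has sup over {x : |x−a| ≥ δ} of f(x) < 1. Let ψ : ℝ^t → ℝ be bounded, measurable, and continuous at a. Then for every measurable set Z ⊆ ℝ^t, ∫_Z ψ(a + z/√n) · f(a + z/√n)^n dz converges to ψ(a) · ∫_Z exp(−zᵀHz) dz as n → ∞. -/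
open MeasureTheory Filter Asymptotics

/-!
The integrand concentrates at the scale `1 / √n` around the peak. On a fixed ball around `a`, the
expansion bounds `f (a + h) ^ n` by `exp (-m n ‖h‖²)`, which after rescaling is the fixed
integrable function `exp (-m ‖z‖²)`. Outside the ball, `f ≤ c < 1` gives
`f ^ n ≤ c ^ (n - 1) f`, whose rescaled integral is `O(n ^ (d / 2) c ^ n)` in dimension `d`. Hence
the rescaled integrands are dominated up to a perturbation vanishing in `L¹`, and dominated
convergence applies with the pointwise limit `(1 - Q z / n + o(1 / n)) ^ n → exp (-Q z)`.
-/

open scoped Topology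

section QuadraticForm

theorem toQuadraticForm'_apply_eq_sum {ι R : Type*} [Fintype ι] [DecidableEq ι] [CommRing R]
    (M : Matrix ι ι R) (x : ι → R) :
    M.toQuadraticForm' x = ∑ i, ∑ j, x i * M i j * x j := by
  simp [Matrix.toQuadraticForm', Matrix.toLinearMap₂'_apply, mul_assoc, mul_comm (M _ _)]

variable {E : Type*} [NormedAddCommGroup E] [NormedSpace ℝ E] [FiniteDimensional ℝ E]
  {Q : QuadraticForm ℝ E}

theorem continuous_quadraticForm (Q : QuadraticForm ℝ E) : Continuous Q := by
  let B := (QuadraticMap.associated (R := ℝ) Q).toContinuousBilinearMap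
  have hB : ∀ x, B x x = Q x := QuadraticMap.associated_eq_self_apply ℝ Q
  exact (B.continuous.clm_apply continuous_id).congr hB

theorem exists_mul_sq_norm_le_of_posDef (hQ : Q.PosDef) : ∃ m > 0, ∀ x, m * ‖x‖ ^ 2 ≤ Q x := by
  obtain ⟨m, hm, hm_le⟩ : ∃ m > 0, ∀ u ∈ Metric.sphere (0 : E) 1, m ≤ Q u :=
    (isCompact_sphere 0 1).exists_forall_le' (continuous_quadraticForm Q).continuousOn
      fun u hu => hQ u (ne_zero_of_mem_unit_sphere ⟨u, hu⟩)
  refine ⟨m, hm, fun x => ?_⟩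
  rcases eq_or_ne x 0 with rfl | hx
  · simp
  have hx_pos : 0 < ‖x‖ ^ 2 := by positivity
  have h_unit : m ≤ Q (‖x‖⁻¹ • x) := hm_le _ (by simp [norm_smul, hx])
  rwa [QuadraticMap.map_smul, smul_eq_mul, ← mul_inv, ← sq, inv_mul_eq_div,
    le_div_iff₀ hx_pos] at h_unit

variable [MeasurableSpace E] [BorelSpace E] (μ : Measure E) [μ.IsAddHaarMeasure]

theorem integrable_exp_neg_mul_sq_norm {m : ℝ} (hm : 0 < m) :
    Integrable (fun x : E => Real.exp (-(m * ‖x‖ ^ 2))) μ := by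
  let r : ℝ := Module.finrank ℝ E + 1
  have h_top : Tendsto (fun x : E => 1 + ‖x‖ ^ 2) (cocompact E) atTop :=
    tendsto_atTop_add_const_left _ 1
      ((tendsto_pow_atTop two_ne_zero).comp (tendsto_norm_cocompact_atTop (E := E)))
  have h_decay : (fun x : E => Real.exp (-m * (1 + ‖x‖ ^ 2)))
      =O[cocompact E] fun x => (1 + ‖x‖ ^ 2) ^ (-r / 2) :=
    ((isLittleO_exp_neg_mul_rpow_atTop hm (-r / 2)).comp_tendsto h_top).isBigO
  have h_cont : Continuous fun x : E => Real.exp (-m * (1 + ‖x‖ ^ 2)) := by fun_prop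
  have h_int : Integrable (fun x : E => Real.exp (-m * (1 + ‖x‖ ^ 2))) μ :=
    h_cont.locallyIntegrable.integrable_of_isBigO_cocompact h_decay
      ((integrable_rpow_neg_one_add_norm_sq (lt_add_one _)).integrableAtFilter _)
  refine (h_int.const_mul (Real.exp m)).congr (Eventually.of_forall fun x => ?_)
  simp only [← Real.exp_add]
  ring_nf

theorem integrable_exp_neg_of_posDef (hQ : Q.PosDef) :
    Integrable (fun x => Real.exp (-Q x)) μ := by
  obtain ⟨m, hm, hmQ⟩ := exists_mul_sq_norm_le_of_posDef hQ
  have h_cont := continuous_quadraticForm Q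
  refine (integrable_exp_neg_mul_sq_norm μ hm).mono' (by fun_prop)
    (Eventually.of_forall fun x => ?_)
  rw [Real.norm_eq_abs, Real.abs_exp]
  exact Real.exp_le_exp.2 (neg_le_neg (hmQ x))

end QuadraticForm

section Rescaling

variable {E : Type*} [NormedAddCommGroup E] [NormedSpace ℝ E]

theorem tendsto_inv_sqrt_natCast_smul (z : E) :
    Tendsto (fun n : ℕ => (√n)⁻¹ • z) atTop (𝓝 0) := by
  have h_inv : Tendsto (fun n : ℕ => (√n)⁻¹) atTop (𝓝 0) :=
    tendsto_inv_atTop_zero.comp (Real.tendsto_sqrt_atTop.comp tendsto_natCast_atTop_atTop)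
  simpa using h_inv.smul_const z

theorem natCast_mul_sq_norm_inv_sqrt_smul {n : ℕ} (hn : n ≠ 0) (z : E) :
    n * ‖(√n)⁻¹ • z‖ ^ 2 = ‖z‖ ^ 2 := by
  rw [norm_smul, mul_pow, norm_inv, inv_pow, Real.norm_eq_abs, sq_abs, Real.sq_sqrt n.cast_nonneg]
  exact mul_inv_cancel_left₀ (Nat.cast_ne_zero.2 hn) _

theorem natCast_mul_quadraticForm_inv_sqrt_smul (Q : QuadraticForm ℝ E) {n : ℕ} (hn : n ≠ 0)
    (z : E) : n * Q ((√n)⁻¹ • z) = Q z := by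
  rw [QuadraticMap.map_smul, ← mul_inv, Real.mul_self_sqrt n.cast_nonneg, smul_eq_mul]
  exact mul_inv_cancel_left₀ (Nat.cast_ne_zero.2 hn) _

theorem tendsto_natCast_mul_of_isLittleO_sq_norm {g : E → ℝ}
    (hg : g =o[𝓝 0] fun h => ‖h‖ ^ 2) (z : E) :
    Tendsto (fun n : ℕ => n * g ((√n)⁻¹ • z)) atTop (𝓝 0) := by
  have h_mul : (fun n : ℕ => n * g ((√n)⁻¹ • z)) =o[atTop]
      fun n : ℕ => (n : ℝ) * ‖(√n)⁻¹ • z‖ ^ 2 :=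
    (isBigO_refl _ _).mul_isLittleO (hg.comp_tendsto (tendsto_inv_sqrt_natCast_smul z))
  have h_const : (fun n : ℕ => (n : ℝ) * ‖(√n)⁻¹ • z‖ ^ 2) =ᶠ[atTop] fun _ => ‖z‖ ^ 2 := by
    filter_upwards [eventually_ne_atTop 0] with n hn
    exact natCast_mul_sq_norm_inv_sqrt_smul hn z
  exact (isLittleO_one_iff ℝ).1 <| (h_mul.trans_eventuallyEq h_const).trans_isBigO <|
    isBigO_const_const _ one_ne_zero _

theorem tendsto_pow_exp_neg_of_isLittleO_s14 {Q : QuadraticForm ℝ E} {f : E → ℝ}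
    (hf : (fun h => f h - (1 - Q h)) =o[𝓝 0] fun h => ‖h‖ ^ 2) (z : E) :
    Tendsto (fun n : ℕ => f ((√n)⁻¹ • z) ^ n) atTop (𝓝 (Real.exp (-Q z))) := by
  have h_lim : Tendsto (fun n : ℕ => n * (f ((√n)⁻¹ • z) - 1)) atTop (𝓝 (-Q z)) := by
    have h_rem := (tendsto_natCast_mul_of_isLittleO_sq_norm hf z).sub_const (Q z)
    rw [zero_sub] at h_rem
    refine h_rem.congr' ?_
    filter_upwards [eventually_ne_atTop 0] with n hn
    rw [← natCast_mul_quadraticForm_inv_sqrt_smul Q hn z]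
    ring
  simpa using Real.tendsto_one_add_pow_exp_of_tendsto h_lim

variable {F : Type*} [NormedAddCommGroup F] [NormedSpace ℝ F]
  [FiniteDimensional ℝ E] [MeasurableSpace E] [BorelSpace E] (μ : Measure E) [μ.IsAddHaarMeasure]

theorem tendsto_integral_norm_pow_smul_comp_inv_sqrt_smul {c : ℝ} (hc : |c| < 1) (f : E → F) :
    Tendsto (fun n : ℕ => ∫ z, ‖c ^ n • f ((√n)⁻¹ • z)‖ ∂μ) atTop (𝓝 0) := by
  let d := Module.finrank ℝ E
  have h_poly : Tendsto (fun n : ℕ => √n ^ d * |c| ^ n) atTop (𝓝 0) := by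
    refine squeeze_zero (fun n => by positivity) (fun n => ?_)
      (tendsto_pow_const_mul_const_pow_of_abs_lt_one d (r := |c|) (by rwa [abs_abs]))
    have h_sqrt : √(n : ℝ) ≤ n :=
      Real.sqrt_le_iff.2 ⟨n.cast_nonneg, mod_cast Nat.le_self_pow two_ne_zero n⟩
    gcongr
  have h_lim := h_poly.mul_const (∫ z, ‖f z‖ ∂μ)
  rw [zero_mul] at h_lim
  refine h_lim.congr fun n => ?_
  simp only [norm_smul, norm_pow, Real.norm_eq_abs]
  rw [integral_const_mul, Measure.integral_comp_inv_smul_of_nonneg μ (‖f ·‖) (Real.sqrt_nonneg _),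
    smul_eq_mul, ← mul_assoc, mul_comm (|c| ^ n)]

end Rescaling

section DominatedConvergence

variable {α ι G : Type*} [MeasurableSpace α] {μ : Measure α} [NormedAddCommGroup G]

-- Truncated subtraction in `ℝ≥0∞` makes the excess of `‖F i - f‖ₑ` over `‖g i‖ₑ` dominated by a
-- fixed integrable function, while the part subtracted vanishes in `L¹`.
theorem tendsto_lintegral_enorm_sub_of_norm_le_add {l : Filter ι} [l.IsCountablyGenerated]
    {F : ι → α → G} {f : α → G} {b : α → ℝ} {g : ι → α → ℝ}
    (hF : ∀ᶠ i in l, AEStronglyMeasurable (F i) μ) (hf : Integrable f μ) (hb : Integrable b μ)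
    (hg : ∀ᶠ i in l, AEStronglyMeasurable (g i) μ)
    (hg_lim : Tendsto (fun i => ∫⁻ x, ‖g i x‖ₑ ∂μ) l (𝓝 0))
    (h_le : ∀ᶠ i in l, ∀ᵐ x ∂μ, ‖F i x‖ ≤ b x + g i x)
    (h_lim : ∀ᵐ x ∂μ, Tendsto (fun i => F i x) l (𝓝 (f x))) :
    Tendsto (fun i => ∫⁻ x, ‖F i x - f x‖ₑ ∂μ) l (𝓝 0) := by
  have h_excess : Tendsto (fun i => ∫⁻ x, (‖F i x - f x‖ₑ - ‖g i x‖ₑ) ∂μ) l (𝓝 0) := by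
    rw [← lintegral_zero (μ := μ)]
    refine tendsto_lintegral_filter_of_dominated_convergence' (fun x => ‖b x‖ₑ + ‖f x‖ₑ)
      ?_ ?_ ?_ ?_
    · filter_upwards [hF, hg] with i hFi hgi
      exact (hFi.sub hf.1).enorm.sub hgi.enorm
    · filter_upwards [h_le] with i hi
      filter_upwards [hi] with x hx
      have hFx : ‖F i x‖ₑ ≤ ‖b x‖ₑ + ‖g i x‖ₑ :=
        (enorm_le_iff_norm_le.2 (hx.trans (Real.le_norm_self _))).trans (enorm_add_le _ _)
      rw [tsub_le_iff_right, add_right_comm]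
      exact enorm_sub_le.trans (add_le_add_left hFx _)
    · rw [lintegral_add_left' hb.1.enorm]
      exact ENNReal.add_ne_top.2 ⟨hb.2.ne, hf.2.ne⟩
    · filter_upwards [h_lim] with x hx
      have h_enorm := (hx.sub_const (f x)).enorm
      rw [sub_self, enorm_zero] at h_enorm
      exact tendsto_of_tendsto_of_tendsto_of_le_of_le tendsto_const_nhds h_enorm
        (fun _ => zero_le) fun _ => tsub_le_self
  have h_sum := h_excess.add hg_lim
  rw [add_zero] at h_sum
  refine tendsto_of_tendsto_of_tendsto_of_le_of_le' tendsto_const_nhds h_sum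
    (Eventually.of_forall fun _ => zero_le) ?_
  filter_upwards [hg] with i hgi
  rw [← lintegral_add_right' _ hgi.enorm]
  exact lintegral_mono fun x => le_tsub_add

theorem tendsto_setIntegral_of_norm_le_add [NormedSpace ℝ G] {l : Filter ι} [l.IsCountablyGenerated]
    {F : ι → α → G} {f : α → G} {b : α → ℝ} {g : ι → α → ℝ}
    (hF : ∀ᶠ i in l, AEStronglyMeasurable (F i) μ) (hf : Integrable f μ) (hb : Integrable b μ)
    (hg : ∀ᶠ i in l, Integrable (g i) μ)
    (hg_lim : Tendsto (fun i => ∫ x, ‖g i x‖ ∂μ) l (𝓝 0))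
    (h_le : ∀ᶠ i in l, ∀ᵐ x ∂μ, ‖F i x‖ ≤ b x + g i x)
    (h_lim : ∀ᵐ x ∂μ, Tendsto (fun i => F i x) l (𝓝 (f x))) (s : Set α) :
    Tendsto (fun i => ∫ x in s, F i x ∂μ) l (𝓝 (∫ x in s, f x ∂μ)) := by
  have hg_enorm : Tendsto (fun i => ∫⁻ x, ‖g i x‖ₑ ∂μ) l (𝓝 0) := by
    rw [← ENNReal.ofReal_zero]
    refine (ENNReal.tendsto_ofReal hg_lim).congr' ?_
    filter_upwards [hg] with i hgi using ofReal_integral_norm_eq_lintegral_enorm hgi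
  refine tendsto_setIntegral_of_L1 f hf.1 ?_ ?_ s
  · filter_upwards [hF, hg, h_le] with i hFi hgi hi using (hb.add hgi).mono' hFi hi
  · exact tendsto_lintegral_enorm_sub_of_norm_le_add hF hf hb (hg.mono fun _ hgi => hgi.1)
      hg_enorm h_le h_lim

end DominatedConvergence

section Peak

variable {E F : Type*} [NormedAddCommGroup E] [NormedSpace ℝ E] [FiniteDimensional ℝ E]
  [NormedAddCommGroup F] [NormedSpace ℝ F] [CompleteSpace F] {Q : QuadraticForm ℝ E} {f : E → ℝ}

theorem exists_eventually_le_exp_neg_mul_sq_norm (hQ : Q.PosDef)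
    (hf : (fun h => f h - (1 - Q h)) =o[𝓝 0] fun h => ‖h‖ ^ 2) :
    ∃ m > 0, ∀ᶠ h in 𝓝 0, f h ≤ Real.exp (-(m * ‖h‖ ^ 2)) := by
  obtain ⟨m, hm, hmQ⟩ := exists_mul_sq_norm_le_of_posDef hQ
  refine ⟨m / 2, half_pos hm, ?_⟩
  filter_upwards [hf.def (half_pos hm)] with h h_rem
  rw [Real.norm_eq_abs, norm_pow, norm_norm] at h_rem
  calc f h ≤ 1 - Q h + m / 2 * ‖h‖ ^ 2 := sub_le_iff_le_add'.1 ((le_abs_self _).trans h_rem)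
    _ ≤ -(m / 2 * ‖h‖ ^ 2) + 1 := by linarith [hmQ h]
    _ ≤ Real.exp (-(m / 2 * ‖h‖ ^ 2)) := Real.add_one_le_exp _

theorem exists_pow_le_exp_neg_add (hQ : Q.PosDef) (hf_nonneg : ∀ h, 0 ≤ f h)
    (hf : (fun h => f h - (1 - Q h)) =o[𝓝 0] fun h => ‖h‖ ^ 2)
    (hf_away : ∀ δ > 0, ∃ c < (1 : ℝ), ∀ h, δ ≤ ‖h‖ → f h ≤ c) :
    ∃ m > 0, ∃ c, 0 < c ∧ c < 1 ∧ ∀ n : ℕ, n ≠ 0 → ∀ h,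
      f h ^ n ≤ Real.exp (-(m * (n * ‖h‖ ^ 2))) + c⁻¹ * (c ^ n * f h) := by
  obtain ⟨m, hm, h_near⟩ := exists_eventually_le_exp_neg_mul_sq_norm hQ hf
  obtain ⟨δ, hδ, h_near⟩ := Metric.eventually_nhds_iff.1 h_near
  obtain ⟨c, hc, h_far⟩ := hf_away δ hδ
  -- The supremum bound may be zero or negative; enlarging it keeps `c⁻¹` meaningful.
  have hc_pos : 0 < max c (1 / 2) := by positivity
  refine ⟨m, hm, max c (1 / 2), hc_pos, max_lt hc one_half_lt_one, fun n hn h => ?_⟩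
  rcases lt_or_ge ‖h‖ δ with h_lt | h_ge
  · have h_pow : f h ^ n ≤ Real.exp (-(m * (n * ‖h‖ ^ 2))) :=
      calc f h ^ n ≤ Real.exp (-(m * ‖h‖ ^ 2)) ^ n :=
            pow_le_pow_left₀ (hf_nonneg h) (h_near (by simpa using h_lt)) n
        _ = Real.exp (-(m * (n * ‖h‖ ^ 2))) := by rw [← Real.exp_nat_mul]; ring_nf
    have := hf_nonneg h
    exact h_pow.trans (le_add_of_nonneg_right (by positivity))
  · have h_pow : f h ^ n ≤ (max c (1 / 2))⁻¹ * (max c (1 / 2) ^ n * f h) := by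
      rw [le_inv_mul_iff₀ hc_pos, ← pow_sub_one_mul hn (f h), ← mul_pow_sub_one hn (max c _),
        mul_assoc]
      have := hf_nonneg h
      gcongr
      exact (h_far h h_ge).trans (le_max_left _ _)
    exact h_pow.trans (le_add_of_nonneg_left (Real.exp_pos _).le)

theorem exists_pow_comp_inv_sqrt_smul_le_exp_neg_add (hQ : Q.PosDef) (hf_nonneg : ∀ h, 0 ≤ f h)
    (hf : (fun h => f h - (1 - Q h)) =o[𝓝 0] fun h => ‖h‖ ^ 2)
    (hf_away : ∀ δ > 0, ∃ c < (1 : ℝ), ∀ h, δ ≤ ‖h‖ → f h ≤ c) :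
    ∃ m > 0, ∃ c, 0 < c ∧ c < 1 ∧ ∀ n : ℕ, n ≠ 0 → ∀ z,
      f ((√n)⁻¹ • z) ^ n ≤ Real.exp (-(m * ‖z‖ ^ 2)) + c⁻¹ * (c ^ n * f ((√n)⁻¹ • z)) := by
  obtain ⟨m, hm, c, hc_pos, hc_lt, h_le⟩ := exists_pow_le_exp_neg_add hQ hf_nonneg hf hf_away
  refine ⟨m, hm, c, hc_pos, hc_lt, fun n hn z => ?_⟩
  rw [← natCast_mul_sq_norm_inv_sqrt_smul hn z]
  exact h_le n hn _

variable [MeasurableSpace E] [BorelSpace E] {μ : Measure E} [μ.IsAddHaarMeasure]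

theorem tendsto_setIntegral_pow_smul_comp_inv_sqrt_smul {ψ : E → F} (hQ : Q.PosDef)
    (hf_int : Integrable f μ) (hf_nonneg : ∀ h, 0 ≤ f h)
    (hf : (fun h => f h - (1 - Q h)) =o[𝓝 0] fun h => ‖h‖ ^ 2)
    (hf_away : ∀ δ > 0, ∃ c < (1 : ℝ), ∀ h, δ ≤ ‖h‖ → f h ≤ c)
    (hψ_meas : AEStronglyMeasurable ψ μ) (hψ_bdd : ∃ B, ∀ h, ‖ψ h‖ ≤ B)
    (hψ_cont : ContinuousAt ψ 0) (s : Set E) :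
    Tendsto (fun n : ℕ => ∫ z in s, f ((√n)⁻¹ • z) ^ n • ψ ((√n)⁻¹ • z) ∂μ) atTop
      (𝓝 ((∫ z in s, Real.exp (-Q z) ∂μ) • ψ 0)) := by
  obtain ⟨B, hB⟩ := hψ_bdd
  obtain ⟨m, hm, c, hc_pos, hc_lt, h_le⟩ :=
    exists_pow_comp_inv_sqrt_smul_le_exp_neg_add hQ hf_nonneg hf hf_away
  have h_inv_ne : ∀ᶠ n : ℕ in atTop, (√n)⁻¹ ≠ 0 := by
    filter_upwards [eventually_gt_atTop 0] with n hn
    positivity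
  have h_meas : ∀ᶠ n : ℕ in atTop,
      AEStronglyMeasurable (fun z => f ((√n)⁻¹ • z) ^ n • ψ ((√n)⁻¹ • z)) μ := by
    filter_upwards [h_inv_ne] with n hn
    have hψ_comp : AEStronglyMeasurable (fun z => ψ ((√n)⁻¹ • z)) μ :=
      hψ_meas.comp_quasiMeasurePreserving (Measure.quasiMeasurePreserving_smul μ hn)
    exact ((hf_int.comp_smul hn).1.pow n).smul hψ_comp
  have h_far_int : ∀ᶠ n : ℕ in atTop,
      Integrable (fun z => B * c⁻¹ * (c ^ n • f ((√n)⁻¹ • z))) μ := by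
    filter_upwards [h_inv_ne] with n hn using ((hf_int.comp_smul hn).smul (c ^ n)).const_mul _
  have h_far_lim : Tendsto (fun n : ℕ => ∫ z, ‖B * c⁻¹ * (c ^ n • f ((√n)⁻¹ • z))‖ ∂μ) atTop
      (𝓝 0) := by
    have hc_abs : |c| < 1 := (abs_of_pos hc_pos).trans_lt hc_lt
    simpa only [norm_mul (B * c⁻¹), integral_const_mul, mul_zero] using
      (tendsto_integral_norm_pow_smul_comp_inv_sqrt_smul μ hc_abs f).const_mul ‖B * c⁻¹‖
  have h_bound : ∀ᶠ n : ℕ in atTop, ∀ᵐ z ∂μ, ‖f ((√n)⁻¹ • z) ^ n • ψ ((√n)⁻¹ • z)‖ ≤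
      B * Real.exp (-(m * ‖z‖ ^ 2)) + B * c⁻¹ * (c ^ n • f ((√n)⁻¹ • z)) := by
    filter_upwards [eventually_ne_atTop 0] with n hn
    refine Eventually.of_forall fun z => ?_
    rw [norm_smul, norm_pow, Real.norm_of_nonneg (hf_nonneg _), mul_assoc, ← mul_add, mul_comm]
    have hB_nonneg : 0 ≤ B := (norm_nonneg _).trans (hB 0)
    exact mul_le_mul (hB _) (h_le n hn z) (pow_nonneg (hf_nonneg _) n) hB_nonneg
  rw [← integral_smul_const]
  exact tendsto_setIntegral_of_norm_le_add h_meas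
    ((integrable_exp_neg_of_posDef μ hQ).smul_const _)
    ((integrable_exp_neg_mul_sq_norm μ hm).const_mul _) h_far_int h_far_lim h_bound
    (Eventually.of_forall fun z => (tendsto_pow_exp_neg_of_isLittleO_s14 hf z).smul
      (hψ_cont.tendsto.comp (tendsto_inv_sqrt_natCast_smul z))) s

theorem vonMises_aux_multi_dim_general (a : E) (hQ : Q.PosDef) (f : E → ℝ)
    (hf_int : Integrable f μ) (hf_nonneg : ∀ x, 0 ≤ f x)
    (hexp : (fun h => f (a + h) - (1 - Q h)) =o[𝓝 0] fun h => ‖h‖ ^ 2)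
    (hsup : ∀ δ > 0, ∃ c < (1 : ℝ), ∀ x, δ ≤ ‖x - a‖ → f x ≤ c)
    (ψ : E → F) (hψ_meas : AEStronglyMeasurable ψ μ) (hψ_bdd : ∃ B, ∀ x, ‖ψ x‖ ≤ B)
    (hψ_cont : ContinuousAt ψ a) (Z : Set E) :
    Tendsto (fun n : ℕ => ∫ z in Z, f (a + (√n)⁻¹ • z) ^ n • ψ (a + (√n)⁻¹ • z) ∂μ) atTop
      (𝓝 ((∫ z in Z, Real.exp (-Q z) ∂μ) • ψ a)) := by
  obtain ⟨B, hB⟩ := hψ_bdd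
  have hψ_cont₀ : ContinuousAt (fun h => ψ (a + h)) 0 :=
    ContinuousAt.comp (by simpa using hψ_cont) (by fun_prop)
  simpa using tendsto_setIntegral_pow_smul_comp_inv_sqrt_smul (f := fun h => f (a + h)) hQ
    (hf_int.comp_add_left a) (fun h => hf_nonneg (a + h)) hexp
    (fun δ hδ => (hsup δ hδ).imp fun c hc => ⟨hc.1, fun h hh => hc.2 _ (by simpa using hh)⟩)
    (hψ_meas.comp_quasiMeasurePreserving (measurePreserving_add_left μ a).quasiMeasurePreserving)
    ⟨B, fun h => hB (a + h)⟩ hψ_cont₀ Z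

end Peak

/-- Von Mises's 1919 multi-dimensional auxiliary theorem (equal factors,
constant matrix case): for `f ≤ 1` with a unique nondegenerate maximum
`f(a) = 1` and quadratic behavior `f(a+h) = 1 − hᵀHh + o(|h|²)` there,
`∫_Z ψ(a + z/√n) f(a + z/√n)^n dz → ψ(a) ∫_Z exp(−zᵀHz) dz`
for any measurable part of space `Z`. -/
theorem vonMises_aux_multi_dim (t : ℕ) (ht : 1 ≤ t)
    (a : Fin t → ℝ) (H : Matrix (Fin t) (Fin t) ℝ) (hH : H.PosDef)
    (f : (Fin t → ℝ) → ℝ) (hf_meas : Measurable f) (hf_int : Integrable f)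
    (hf01 : ∀ x, f x ∈ Set.Icc (0:ℝ) 1) (hfa : f a = 1)
    (hexp : (fun h : Fin t → ℝ => f (a + h) - (1 - ∑ i, ∑ j, h i * H i j * h j))
      =o[nhds 0] (fun h : Fin t → ℝ => ‖h‖ ^ 2))
    (hsup : ∀ δ > 0, ∃ c < (1:ℝ), ∀ x, δ ≤ ‖x - a‖ → f x ≤ c)
    (ψ : (Fin t → ℝ) → ℝ) (hψ_meas : Measurable ψ) (hψ_bdd : ∃ B, ∀ x, |ψ x| ≤ B)
    (hψ_cont : ContinuousAt ψ a)
    (Z : Set (Fin t → ℝ)) (hZ : MeasurableSet Z) :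
    Tendsto (fun n : ℕ =>
      ∫ z in Z, ψ (a + (Real.sqrt n)⁻¹ • z) * f (a + (Real.sqrt n)⁻¹ • z) ^ n)
      atTop
      (nhds (ψ a * ∫ z in Z, Real.exp (-(∑ i, ∑ j, z i * H i j * z j)))) := by
  simpa only [toQuadraticForm'_apply_eq_sum, smul_eq_mul, mul_comm] using
    vonMises_aux_multi_dim_general a hH.toQuadraticForm' f hf_int (fun x => (hf01 x).1)
      (by simpa only [toQuadraticForm'_apply_eq_sum]) hsup ψ hψ_meas.aestronglyMeasurable
      hψ_bdd hψ_cont Z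
end

section
/- Fix k ≥ 2 and p₁, …, p_k ∈ (0,1) with p₁ + ⋯ + p_k = 1. For each n let n₁^{(n)}, …, n_k^{(n)} be positive natural numbers with n₁^{(n)} + ⋯ + n_k^{(n)} = n, and suppose there is a constant K with |n_i^{(n)} − n p_i| ≤ K√n for all i and n. Then ∑_{i=1}^k n_i^{(n)} · log(n p_i / n_i^{(n)}) + (1/2) ∑_{i=1}^k (n_i^{(n)} − n p_i)² / (n p_i) converges to 0 as n → ∞. -/
open Filter

/-!
Write each observed count as `O = E (1 + u)`, where `E` is the expected count. Since
`(1 + u) log (1 + u) = u + u² / 2 + O(u³)`, we have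
`O log (E / O) = -(O - E) - (O - E)² / (2 E) + O((O - E)³ / E²)`.
The linear terms cancel in the sum over the cells, because observed and expected counts have the
same total. A deviation of order `√E` makes the error of order `1 / √E`.
-/

open Asymptotics Topology

lemma log_one_add_sub_isBigO_cube :
    (fun u : ℝ => Real.log (1 + u) - (u - u ^ 2 / 2)) =O[𝓝 0] fun u => u ^ 3 := by
  refine IsBigO.of_bound 2 ?_
  filter_upwards [Metric.closedBall_mem_nhds (0 : ℝ) one_half_pos] with u hu
  rw [mem_closedBall_zero_iff, Real.norm_eq_abs] at hu
  have taylor_bound : |Real.log (1 + u) - (u - u ^ 2 / 2)| ≤ |u| ^ 3 / (1 - |u|) := by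
    convert Real.abs_log_sub_add_sum_range_le (x := -u) (by rw [abs_neg]; linarith) 2 using 2
    · simp only [Finset.sum_range_succ, Finset.sum_range_zero, sub_neg_eq_add]
      push_cast
      ring
    · rw [abs_neg]
    · rw [abs_neg]
  calc ‖Real.log (1 + u) - (u - u ^ 2 / 2)‖ ≤ |u| ^ 3 / (1 - |u|) := taylor_bound
    _ ≤ |u| ^ 3 / (1 / 2) := by gcongr; linarith
    _ = 2 * ‖u ^ 3‖ := by rw [norm_pow, Real.norm_eq_abs]; ring

lemma one_add_mul_log_one_add_sub_isBigO_cube :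
    (fun u : ℝ => (1 + u) * Real.log (1 + u) - (u + u ^ 2 / 2)) =O[𝓝 0] fun u => u ^ 3 := by
  have one_add_isBigO_one : (fun u : ℝ => 1 + u) =O[𝓝 0] fun _ => (1 : ℝ) :=
    (by fun_prop : Continuous fun u : ℝ => 1 + u).continuousAt.isBigO_one ℝ
  have log_remainder : (fun u : ℝ => (1 + u) * (Real.log (1 + u) - (u - u ^ 2 / 2)))
      =O[𝓝 0] fun u => u ^ 3 := by
    simpa only [one_mul] using one_add_isBigO_one.mul log_one_add_sub_isBigO_cube
  have cubic_term : (fun u : ℝ => 1 / 2 * u ^ 3) =O[𝓝 0] fun u => u ^ 3 :=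
    isBigO_const_mul_self _ _ _
  exact (log_remainder.sub cubic_term).congr_left fun u => by ring

section Cells

variable {α : Type*} {l : Filter α}

lemma mul_log_div_add_isBigO {O E : α → ℝ} (hE : ∀ᶠ a in l, E a ≠ 0)
    (h_rel : Tendsto (fun a => (O a - E a) / E a) l (𝓝 0)) :
    (fun a => O a * Real.log (E a / O a) + (O a - E a) + 1 / 2 * ((O a - E a) ^ 2 / E a))
      =O[l] fun a => (O a - E a) ^ 3 / E a ^ 2 := by
  have scaled_taylor := (isBigO_refl (fun a => -E a) l).mul
    (one_add_mul_log_one_add_sub_isBigO_cube.comp_tendsto h_rel)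
  refine (scaled_taylor.congr' ?_ ?_).trans (isBigO_refl _ l).neg_left
  · filter_upwards [hE] with a ha
    have one_add_relative : 1 + (O a - E a) / E a = O a / E a := by field_simp; ring
    simp only [Function.comp_apply, one_add_relative]
    rw [← inv_div (O a), Real.log_inv]
    field_simp
    ring
  · filter_upwards [hE] with a ha
    simp only [Function.comp_apply]
    field_simp

lemma tendsto_div_zero_of_cube_isLittleO_sq {d E : α → ℝ} (hE : Tendsto E l atTop)
    (hd : (fun a => d a ^ 3) =o[l] fun a => E a ^ 2) :
    Tendsto (fun a => d a / E a) l (𝓝 0) := by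
  have sq_isLittleO_cube : (fun a => E a ^ 2) =o[l] fun a => E a ^ 3 :=
    (isLittleO_pow_pow_atTop_of_lt (by norm_num : 2 < 3)).comp_tendsto hE
  exact ((hd.trans sq_isLittleO_cube).of_pow three_ne_zero).tendsto_div_nhds_zero

lemma cube_isLittleO_sq_of_isBigO_sqrt {d x : α → ℝ} (hx : Tendsto x l atTop)
    (hd : d =O[l] fun a => √(x a)) :
    (fun a => d a ^ 3) =o[l] fun a => x a ^ 2 := by
  have sqrt_cube_isLittleO : (fun a => √(x a) ^ 3) =o[l] fun a => √(x a) ^ 4 :=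
    (isLittleO_pow_pow_atTop_of_lt (by norm_num : 3 < 4)).comp_tendsto
      (Real.tendsto_sqrt_atTop.comp hx)
  refine (hd.pow 3).trans_isLittleO (sqrt_cube_isLittleO.congr' .rfl ?_)
  filter_upwards [hx.eventually_ge_atTop 0] with a ha
  rw [show 4 = 2 * 2 from rfl, pow_mul, Real.sq_sqrt ha]

lemma cube_isLittleO_mul_const_sq_of_abs_le_mul_sqrt {d x : α → ℝ} {K c : ℝ} (hc : c ≠ 0)
    (hx : Tendsto x l atTop) (hd : ∀ᶠ a in l, |d a| ≤ K * √(x a)) :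
    (fun a => d a ^ 3) =o[l] fun a => (x a * c) ^ 2 := by
  have d_isBigO_sqrt : d =O[l] fun a => √(x a) :=
    IsBigO.of_bound K <| by
      simpa only [Real.norm_eq_abs, abs_of_nonneg (Real.sqrt_nonneg _)] using hd
  simp only [mul_comm _ c, mul_pow]
  exact (cube_isLittleO_sq_of_isBigO_sqrt hx d_isBigO_sqrt).const_mul_right (pow_ne_zero 2 hc)

/-- The condition `hdev` says `O - E = o(E ^ (2 / 3))`, without real powers. -/
theorem neyman_pearson_loglik_chisq_general {ι : Type*} [Fintype ι] {O E : α → ι → ℝ}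
    (hE : ∀ i, Tendsto (fun a => E a i) l atTop)
    (hdev : ∀ i, (fun a => (O a i - E a i) ^ 3) =o[l] fun a => E a i ^ 2)
    (hsum : ∀ᶠ a in l, ∑ i, O a i = ∑ i, E a i) :
    Tendsto (fun a =>
      (∑ i, O a i * Real.log (E a i / O a i)) + (1 / 2) * ∑ i, (O a i - E a i) ^ 2 / E a i)
      l (𝓝 0) := by
  have cell_tendsto (i : ι) : Tendsto (fun a => O a i * Real.log (E a i / O a i) +
      (O a i - E a i) + 1 / 2 * ((O a i - E a i) ^ 2 / E a i)) l (𝓝 0) :=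
    (mul_log_div_add_isBigO ((hE i).eventually_ne_atTop 0)
      (tendsto_div_zero_of_cube_isLittleO_sq (hE i) (hdev i))).trans_tendsto
      (hdev i).tendsto_div_nhds_zero
  have sum_tendsto := tendsto_finsetSum Finset.univ fun i _ => cell_tendsto i
  rw [Finset.sum_const_zero] at sum_tendsto
  refine sum_tendsto.congr' ?_
  filter_upwards [hsum] with a ha
  have linear_terms_cancel : ∑ i, (O a i - E a i) = 0 := by
    rw [Finset.sum_sub_distrib, ha, sub_self]
  rw [Finset.sum_add_distrib, Finset.sum_add_distrib, linear_terms_cancel, add_zero,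
    ← Finset.mul_sum]

end Cells

/-- Neyman–Pearson 1928 large-sample approximation of the log-likelihood ratio
by minus one half of Pearson's chi-square statistic:
`log λ + χ²/2 → 0` when all standardized cell deviations stay bounded. -/
theorem neyman_pearson_loglik_chisq (k : ℕ) (hk : 2 ≤ k)
    (p : Fin k → ℝ) (hp : ∀ i, p i ∈ Set.Ioo (0:ℝ) 1) (hsum : ∑ i, p i = 1)
    (N : ℕ → Fin k → ℕ)
    (hpos : ∀ n, k ≤ n → ∀ i, 0 < N n i)
    (hN : ∀ n, k ≤ n → ∑ i, N n i = n)
    (K : ℝ) (hK : ∀ n, k ≤ n → ∀ i, |(N n i : ℝ) - n * p i| ≤ K * Real.sqrt n) :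
    Tendsto (fun n : ℕ =>
      (∑ i, (N n i : ℝ) * Real.log ((n : ℝ) * p i / (N n i : ℝ))) +
        (1/2) * ∑ i, ((N n i : ℝ) - n * p i) ^ 2 / ((n : ℝ) * p i))
      atTop (nhds 0) := by
  have total_eq (n : ℕ) (hn : k ≤ n) : ∑ i, (N n i : ℝ) = ∑ i, (n : ℝ) * p i := by
    rw [← Finset.mul_sum, hsum, mul_one, ← Nat.cast_sum, hN n hn]
  exact neyman_pearson_loglik_chisq_general
    (fun i => tendsto_natCast_atTop_atTop.atTop_mul_const (hp i).1)
    (fun i => cube_isLittleO_mul_const_sq_of_abs_le_mul_sqrt (hp i).1.ne'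
      tendsto_natCast_atTop_atTop (eventually_atTop.2 ⟨k, fun n hn => hK n hn i⟩))
    (eventually_atTop.2 ⟨k, total_eq⟩)
end

section
/- Fix k ≥ 2 and p₁, …, p_k ∈ (0,1) with p₁ + ⋯ + p_k = 1. For each n let n₁^{(n)}, …, n_k^{(n)} be positive natural numbers with n₁^{(n)} + ⋯ + n_k^{(n)} = n, and suppose there is a constant K with |n_i^{(n)} − n p_i| ≤ K√n for all i and n. Then ∑_{i=1}^k (n_i^{(n)} − n p_i)² / (n p_i) − ∑_{i=1}^k (n_i^{(n)} − n p_i)² / n_i^{(n)} converges to 0 as n → ∞. -/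
open Filter

/-!
With `e` the expected and `m` the observed count of a cell, the two summands differ by exactly
`(m - e) ^ 3 / (e * m)`. A deviation with `(m - e) ^ 3 = o(e ^ 2)` forces `m ~ e`, so the
denominator is equivalent to `e ^ 2` and the difference vanishes. Deviations `O(√n)` qualify,
since `n ^ (3 / 2) = o(n ^ 2)`.
-/

section

open Asymptotics

variable {α : Type*} {l : Filter α}

theorem sub_sq_div_sub_sub_sq_div {F : Type*} [Field F] {e m : F} (he : e ≠ 0) (hm : m ≠ 0) :
    (m - e) ^ 2 / e - (m - e) ^ 2 / m = (m - e) ^ 3 / (e * m) := by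
  field_simp

theorem isEquivalent_of_sub_pow_three_isLittleO_sq {e m : α → ℝ} (he : Tendsto e l atTop)
    (hdev : (fun a => (m a - e a) ^ 3) =o[l] fun a => e a ^ 2) : m ~[l] e := by
  have hpow : (fun a => e a ^ 2) =O[l] fun a => e a ^ 3 :=
    ((isLittleO_pow_pow_atTop_of_lt (𝕜 := ℝ) (by norm_num : 2 < 3)).comp_tendsto he).isBigO
  exact (hdev.trans_isBigO hpow).of_pow (by norm_num)

theorem tendsto_sub_sq_div_sub_sub_sq_div {e m : α → ℝ} (he : Tendsto e l atTop)
    (hdev : (fun a => (m a - e a) ^ 3) =o[l] fun a => e a ^ 2) :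
    Tendsto (fun a => (m a - e a) ^ 2 / e a - (m a - e a) ^ 2 / m a) l (nhds 0) := by
  have hequiv : m ~[l] e := isEquivalent_of_sub_pow_three_isLittleO_sq he hdev
  have hm : Tendsto m l atTop := hequiv.symm.tendsto_atTop he
  have hden : (fun a => e a ^ 2) =O[l] fun a => e a * m a := by
    simpa only [sq] using (isBigO_refl e l).mul hequiv.isBigO_symm
  refine (hdev.trans_isBigO hden).tendsto_div_nhds_zero.congr' ?_
  filter_upwards [he.eventually_ne_atTop 0, hm.eventually_ne_atTop 0] with a hea hma
  exact (sub_sq_div_sub_sub_sq_div hea hma).symm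

theorem chisq_vs_inverse_chisq_general {ι : Type*} [Fintype ι] {e m : α → ι → ℝ}
    (he : ∀ i, Tendsto (fun a => e a i) l atTop)
    (hdev : ∀ i, (fun a => (m a i - e a i) ^ 3) =o[l] fun a => e a i ^ 2) :
    Tendsto (fun a => (∑ i, (m a i - e a i) ^ 2 / e a i) - ∑ i, (m a i - e a i) ^ 2 / m a i)
      l (nhds 0) := by
  simpa only [Finset.sum_sub_distrib, Finset.sum_const_zero] using
    tendsto_finsetSum Finset.univ fun i _ => tendsto_sub_sq_div_sub_sub_sq_div (he i) (hdev i)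

theorem pow_three_isLittleO_sq_of_isBigO_sqrt {d t : α → ℝ} (ht : Tendsto t l atTop)
    (hd : d =O[l] fun a => √(t a)) : (fun a => d a ^ 3) =o[l] fun a => t a ^ 2 := by
  have hsqrt : (fun a => √(t a) ^ 3) =o[l] fun a => √(t a) ^ 4 :=
    (isLittleO_pow_pow_atTop_of_lt (by norm_num)).comp_tendsto (Real.tendsto_sqrt_atTop.comp ht)
  have hsq : (fun a => √(t a) ^ 4) =ᶠ[l] fun a => t a ^ 2 := by
    filter_upwards [ht.eventually_ge_atTop 0] with a ha
    rw [pow_mul (√(t a)) 2 2, Real.sq_sqrt ha]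
  exact (hd.pow 3).trans_isLittleO (hsqrt.trans_eventuallyEq hsq)

theorem isBigO_sqrt_mul_const_of_abs_le {d t : α → ℝ} {K c : ℝ} (hc : 0 < c)
    (hd : ∀ᶠ a in l, |d a| ≤ K * √(t a)) : d =O[l] fun a => √(t a * c) := by
  refine .of_bound (K / √c) (hd.mono fun a ha => ha.trans_eq ?_)
  rw [Real.norm_of_nonneg (Real.sqrt_nonneg _), Real.sqrt_mul' _ hc.le]
  field_simp

end

/-- Asymptotic equality between Pearson's chi-square statistic
`χ² = ∑ (n_i − p_i n)²/(p_i n)` and Neyman's 'inverse' analogue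
`χ̃² = ∑ (n_i − p_i n)²/n_i` when all standardized cell deviations stay bounded. -/
theorem chisq_vs_inverse_chisq (k : ℕ) (hk : 2 ≤ k)
    (p : Fin k → ℝ) (hp : ∀ i, p i ∈ Set.Ioo (0:ℝ) 1) (hsum : ∑ i, p i = 1)
    (N : ℕ → Fin k → ℕ)
    (hpos : ∀ n, k ≤ n → ∀ i, 0 < N n i)
    (hN : ∀ n, k ≤ n → ∑ i, N n i = n)
    (K : ℝ) (hK : ∀ n, k ≤ n → ∀ i, |(N n i : ℝ) - n * p i| ≤ K * Real.sqrt n) :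
    Tendsto (fun n : ℕ =>
      (∑ i, ((N n i : ℝ) - n * p i) ^ 2 / ((n : ℝ) * p i)) -
        ∑ i, ((N n i : ℝ) - n * p i) ^ 2 / (N n i : ℝ))
      atTop (nhds 0) := by
  have he (i : Fin k) : Tendsto (fun n : ℕ => (n : ℝ) * p i) atTop atTop :=
    tendsto_natCast_atTop_atTop.atTop_mul_const (hp i).1
  exact chisq_vs_inverse_chisq_general he fun i => pow_three_isLittleO_sq_of_isBigO_sqrt (he i) <|
    isBigO_sqrt_mul_const_of_abs_le (hp i).1 (eventually_atTop.2 ⟨k, fun n hn => hK n hn i⟩)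
end

section
/- Fix a ∈ (0,1) and let r_n := √(n/(2a(1−a))). Let C_n := (∫_0^1 t^{a n}(1−t)^{(1−a)n} dt)^{−1} (real exponents). Then for every u ∈ ℝ, (1/r_n) · C_n · (a + u/r_n)^{a n} (1 − a − u/r_n)^{(1−a)n} converges to e^{−u²}/√π as n → ∞ (for n large enough that a + u/r_n ∈ (0,1)). -/
open MeasureTheory Filter Real

/-! Up to a factor `exp (-n H(a))` independent of `x`, which cancels in the normalized density, the
likelihood `x^{an} (1 - x)^{(1-a)n}` is `exp (-n D(a ‖ x))`, where `H` is the entropy and `D` the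
Kullback–Leibler divergence of Bernoulli distributions. Since `∂D/∂x = (x - a) / (x (1 - x))`,
Cauchy's mean value theorem gives `D(a ‖ x) = (x - a)² / (2 ξ (1 - ξ))` for some `ξ` between `a`
and `x`. As `x → a` this identifies the Gaussian limit of `exp (-n D(a ‖ a + u / r_n))`, while
`ξ (1 - ξ) ≤ 1/4` yields Pinsker's inequality `2 (x - a)² ≤ D(a ‖ x)`, a Gaussian bound under
which dominated convergence (Laplace's method) gives the limit of the normalizing integral. -/

section

open Set Asymptotics Topology

lemma exists_mem_uIcc_sub_eq_sq_div_two_mul {f g : ℝ → ℝ} {a x : ℝ}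
    (hf : ∀ y ∈ uIcc a x, HasDerivAt f ((y - a) * g y) y) :
    ∃ ξ ∈ uIcc a x, f x - f a = (x - a) ^ 2 / 2 * g ξ := by
  obtain rfl | hax := eq_or_ne a x
  · exact ⟨a, left_mem_uIcc, by simp⟩
  have hsq (y : ℝ) : HasDerivAt (fun y => (y - a) ^ 2 / 2) (y - a) y := by
    simpa using (((hasDerivAt_id y).sub_const a).fun_pow 2).div_const 2
  obtain ⟨ξ, hξ, cauchy⟩ := exists_ratio_hasDerivAt_eq_ratio_slope f (fun y => (y - a) * g y)
    (inf_lt_sup.2 hax) (HasDerivAt.continuousOn hf) (fun y hy => hf y (Ioo_subset_Icc_self hy))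
    (fun y => (y - a) ^ 2 / 2) (fun y => y - a)
    (HasDerivAt.continuousOn fun y _ => hsq y) fun y _ => hsq y
  refine ⟨ξ, Ioo_subset_Icc_self hξ, ?_⟩
  rcases hax.lt_or_gt with h | h
  · rw [inf_eq_left.2 h.le] at hξ cauchy
    rw [sup_eq_right.2 h.le] at cauchy
    refine mul_right_cancel₀ (sub_ne_zero.2 hξ.1.ne') ?_
    linear_combination -cauchy
  · rw [sup_eq_left.2 h.le] at hξ cauchy
    rw [inf_eq_right.2 h.le] at cauchy
    refine mul_right_cancel₀ (sub_ne_zero.2 hξ.2.ne) ?_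
    linear_combination cauchy

section Laplace

variable {f : ℝ → ℝ} {S : Set ℝ} {a c v : ℝ}

lemma tendsto_sqrt_div_const_atTop (hv : 0 < v) : Tendsto (fun n : ℝ => √(n / v)) atTop atTop :=
  tendsto_sqrt_atTop.comp (tendsto_id.atTop_div_const hv)

lemma tendsto_add_div_sqrt_div (hv : 0 < v) (u : ℝ) :
    Tendsto (fun n : ℝ => a + u / √(n / v)) atTop (𝓝 a) := by
  simpa using ((tendsto_sqrt_div_const_atTop hv).const_div_atTop u).const_add a

lemma mul_sq_div_sqrt_div {n : ℝ} (hv : 0 < v) (hn : 0 < n) (u : ℝ) :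
    n * (u / √(n / v)) ^ 2 = v * u ^ 2 := by
  rw [div_pow, sq_sqrt (by positivity)]
  field_simp

lemma tendsto_mul_comp_add_div_sqrt_div (hv : 0 < v) (hf : f ~[𝓝 a] fun x => (x - a) ^ 2 / v)
    (u : ℝ) : Tendsto (fun n : ℝ => n * f (a + u / √(n / v))) atTop (𝓝 (u ^ 2)) := by
  have equiv := (IsEquivalent.refl (u := fun n : ℝ => n)).mul
    (hf.comp_tendsto (tendsto_add_div_sqrt_div hv u))
  refine equiv.symm.tendsto_nhds (tendsto_const_nhds.congr' ?_)
  filter_upwards [eventually_gt_atTop 0] with n hn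
  simp only [Pi.mul_apply, Function.comp_apply, add_sub_cancel_left]
  rw [← mul_div_assoc, mul_sq_div_sqrt_div hv hn, mul_div_cancel_left₀ _ hv.ne']

lemma integral_indicator_add_div (hS : MeasurableSet S) (F : ℝ → ℝ) (a : ℝ) {r : ℝ} (hr : 0 ≤ r) :
    ∫ u, S.indicator F (a + u / r) = r * ∫ x in S, F x := by
  rw [Measure.integral_comp_div (fun y => S.indicator F (a + y)), integral_add_left_eq_self,
    integral_indicator hS, abs_of_nonneg hr, smul_eq_mul]

theorem tendsto_sqrt_div_mul_setIntegral_exp_neg (hS : MeasurableSet S) (hSa : S ∈ 𝓝 a)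
    (hfm : Measurable f) (hc : 0 < c) (hfc : ∀ x ∈ S, c * (x - a) ^ 2 ≤ f x)
    (hv : 0 < v) (hf : f ~[𝓝 a] fun x => (x - a) ^ 2 / v) :
    Tendsto (fun n : ℝ => √(n / v) * ∫ x in S, exp (-(n * f x))) atTop (𝓝 √π) := by
  have gaussian : ∫ u : ℝ, exp (-u ^ 2) = √π := by simpa using integral_gaussian 1
  simp only [← integral_indicator_add_div hS _ a (sqrt_nonneg _), ← gaussian]
  refine tendsto_integral_filter_of_dominated_convergence (fun u => exp (-(c * v) * u ^ 2))
    (.of_forall fun n => ?_) ?_ (integrable_exp_neg_mul_sq (mul_pos hc hv)) (.of_forall fun u => ?_)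
  · have : Measurable (S.indicator fun x => exp (-(n * f x))) :=
      Measurable.indicator (by fun_prop) hS
    exact (this.comp (by fun_prop)).aestronglyMeasurable
  · filter_upwards [eventually_gt_atTop 0] with n hn
    refine .of_forall fun u => ?_
    by_cases hu : a + u / √(n / v) ∈ S
    · have := calc c * v * u ^ 2
          _ = n * (c * (a + u / √(n / v) - a) ^ 2) := by
            rw [add_sub_cancel_left, mul_left_comm, mul_sq_div_sqrt_div hv hn, mul_assoc]
          _ ≤ n * f (a + u / √(n / v)) := by gcongr; exact hfc _ hu
      rw [indicator_of_mem hu, norm_of_nonneg (exp_nonneg _), exp_le_exp]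
      linarith
    · simpa only [indicator_of_notMem hu, norm_zero] using exp_nonneg _
  · refine ((tendsto_mul_comp_add_div_sqrt_div hv hf u).neg.rexp).congr' ?_
    filter_upwards [(tendsto_add_div_sqrt_div hv u).eventually_mem hSa] with n hn
    exact (indicator_of_mem hn fun x => exp (-(n * f x))).symm

theorem tendsto_exp_neg_div_sqrt_div_mul_setIntegral (hS : MeasurableSet S) (hSa : S ∈ 𝓝 a)
    (hfm : Measurable f) (hc : 0 < c) (hfc : ∀ x ∈ S, c * (x - a) ^ 2 ≤ f x)
    (hv : 0 < v) (hf : f ~[𝓝 a] fun x => (x - a) ^ 2 / v) (u : ℝ) :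
    Tendsto (fun n : ℝ => exp (-(n * f (a + u / √(n / v)))) /
      (√(n / v) * ∫ x in S, exp (-(n * f x)))) atTop (𝓝 (exp (-u ^ 2) / √π)) :=
  (tendsto_mul_comp_add_div_sqrt_div hv hf u).neg.rexp.div
    (tendsto_sqrt_div_mul_setIntegral_exp_neg hS hSa hfm hc hfc hv hf) (sqrt_pos.2 pi_pos).ne'

end Laplace

section Bernoulli

/-- The Kullback–Leibler divergence `D(a ‖ x)` of the Bernoulli distribution with parameter `a`
relative to the one with parameter `x`: the exponential rate at which the binomial likelihood of
`x` falls below its maximum at the relative frequency `a`. The formula is meant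
for `a, x ∈ (0, 1)`; at `x = 0` and `x = 1` it takes a finite junk value in place of `∞`. -/
noncomputable def bernoulliKL (a x : ℝ) : ℝ :=
  a * log (a / x) + (1 - a) * log ((1 - a) / (1 - x))

variable {a x : ℝ}

lemma bernoulliKL_self (a : ℝ) : bernoulliKL a a = 0 := by
  simp [bernoulliKL]

lemma measurable_bernoulliKL (a : ℝ) : Measurable (bernoulliKL a) := by
  unfold bernoulliKL
  fun_prop

lemma hasDerivAt_bernoulliKL (ha : a ∈ Ioo (0 : ℝ) 1) (hx : x ∈ Ioo (0 : ℝ) 1) :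
    HasDerivAt (bernoulliKL a) ((x - a) * (x * (1 - x))⁻¹) x := by
  obtain ⟨ha0, ha1⟩ := ha
  obtain ⟨hx0, hx1⟩ := hx
  rw [← sub_pos] at ha1 hx1
  have hlog : HasDerivAt (fun y => a * log (a / y)) (-a / x) x := by
    refine ((((hasDerivAt_const x a).fun_div (hasDerivAt_id' x) hx0.ne').log
      (div_pos ha0 hx0).ne').const_mul a).congr_deriv ?_
    field_simp
    ring
  have hlog_one_sub :
      HasDerivAt (fun y => (1 - a) * log ((1 - a) / (1 - y))) ((1 - a) / (1 - x)) x := by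
    refine ((((hasDerivAt_const x (1 - a)).fun_div ((hasDerivAt_id' x).const_sub 1) hx1.ne').log
      (div_pos ha1 hx1).ne').const_mul (1 - a)).congr_deriv ?_
    field_simp
    ring
  refine (hlog.fun_add hlog_one_sub).congr_deriv ?_
  field_simp
  ring

lemma exists_bernoulliKL_eq_sq_div (ha : a ∈ Ioo (0 : ℝ) 1) (hx : x ∈ Ioo (0 : ℝ) 1) :
    ∃ ξ ∈ uIcc a x, bernoulliKL a x = (x - a) ^ 2 / 2 * (ξ * (1 - ξ))⁻¹ := by
  simpa only [bernoulliKL_self, sub_zero] using exists_mem_uIcc_sub_eq_sq_div_two_mul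
    (g := fun y => (y * (1 - y))⁻¹)
    fun y hy => hasDerivAt_bernoulliKL ha (ordConnected_Ioo.uIcc_subset ha hx hy)

theorem two_mul_sq_le_bernoulliKL (ha : a ∈ Ioo (0 : ℝ) 1) (hx : x ∈ Ioo (0 : ℝ) 1) :
    2 * (x - a) ^ 2 ≤ bernoulliKL a x := by
  obtain ⟨ξ, hξ, hKL⟩ := exists_bernoulliKL_eq_sq_div ha hx
  obtain ⟨hξ0, hξ1⟩ := ordConnected_Ioo.uIcc_subset ha hx hξ
  have hpos : 0 < ξ * (1 - ξ) := mul_pos hξ0 (sub_pos.2 hξ1)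
  have four_le : 4 ≤ (ξ * (1 - ξ))⁻¹ := by
    rw [le_inv_comm₀ four_pos hpos]
    linarith [sq_nonneg (ξ - 1 / 2)]
  rw [hKL]
  nlinarith [sq_nonneg (x - a)]

theorem isEquivalent_bernoulliKL (ha : a ∈ Ioo (0 : ℝ) 1) :
    bernoulliKL a ~[𝓝 a] fun x => (x - a) ^ 2 / (2 * a * (1 - a)) := by
  choose! ξ hξ hKL using fun x hx => exists_bernoulliKL_eq_sq_div (x := x) ha hx
  have hmem : ∀ᶠ x in 𝓝 a, x ∈ Ioo (0 : ℝ) 1 := Ioo_mem_nhds ha.1 ha.2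
  have hξa : Tendsto ξ (𝓝 a) (𝓝 a) := by
    refine tendsto_iff_dist_tendsto_zero.2 <| squeeze_zero' (.of_forall fun _ => dist_nonneg)
      (hmem.mono fun x hx => ?_) (tendsto_iff_dist_tendsto_zero.1 tendsto_id)
    simpa only [dist_comm a] using! dist_left_le_of_mem_uIcc (hξ x hx)
  have ha0 : a ≠ 0 := ha.1.ne'
  have ha1 : 1 - a ≠ 0 := (sub_pos.2 ha.2).ne'
  refine isEquivalent_iff_exists_eq_mul.2 ⟨fun x => a * (1 - a) * (ξ x * (1 - ξ x))⁻¹, ?_, ?_⟩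
  · simpa only [mul_inv_cancel₀ (mul_ne_zero ha0 ha1)] using
      ((hξa.mul (hξa.const_sub 1)).inv₀ (mul_ne_zero ha0 ha1)).const_mul (a * (1 - a))
  · filter_upwards [hmem] with x hx
    rw [hKL x hx, Pi.mul_apply]
    field_simp

lemma rpow_mul_rpow_one_sub_eq_exp (ha : a ∈ Ioo (0 : ℝ) 1) (hx : x ∈ Ioo (0 : ℝ) 1) (n : ℝ) :
    x ^ (a * n) * (1 - x) ^ ((1 - a) * n)
      = exp (-(n * binEntropy a)) * exp (-(n * bernoulliKL a x)) := by
  have hx1 : 0 < 1 - x := sub_pos.2 hx.2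
  rw [rpow_def_of_pos hx.1, rpow_def_of_pos hx1, ← exp_add, ← exp_add, binEntropy, bernoulliKL,
    log_div ha.1.ne' hx.1.ne', log_div (sub_pos.2 ha.2).ne' hx1.ne', log_inv, log_inv]
  congr 1
  ring

lemma integral_rpow_mul_rpow_one_sub_eq (ha : a ∈ Ioo (0 : ℝ) 1) (n : ℝ) :
    ∫ t in (0 : ℝ)..1, t ^ (a * n) * (1 - t) ^ ((1 - a) * n)
      = exp (-(n * binEntropy a)) * ∫ x in Ioo 0 1, exp (-(n * bernoulliKL a x)) := by
  rw [intervalIntegral.integral_of_le zero_le_one, integral_Ioc_eq_integral_Ioo,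
    ← integral_const_mul]
  exact setIntegral_congr_fun measurableSet_Ioo
    fun x hx => rpow_mul_rpow_one_sub_eq_exp ha hx n

end Bernoulli

end

theorem vonMises_binomial_density_general (a : ℝ) (ha : a ∈ Set.Ioo (0 : ℝ) 1) (u : ℝ) :
    Tendsto (fun n : ℝ =>
      (1 / √(n / (2 * a * (1 - a)))) *
        (∫ t in (0:ℝ)..1, t ^ (a * n) * (1 - t) ^ ((1 - a) * n))⁻¹ *
        ((a + u / √(n / (2 * a * (1 - a)))) ^ (a * n) *
          (1 - a - u / √(n / (2 * a * (1 - a)))) ^ ((1 - a) * n)))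
      atTop (nhds (exp (-u ^ 2) / √π)) := by
  have hv : 0 < 2 * a * (1 - a) := mul_pos (mul_pos two_pos ha.1) (sub_pos.2 ha.2)
  have hIoo : Set.Ioo (0 : ℝ) 1 ∈ nhds a := Ioo_mem_nhds ha.1 ha.2
  refine (tendsto_exp_neg_div_sqrt_div_mul_setIntegral measurableSet_Ioo hIoo
    (measurable_bernoulliKL a) two_pos (fun x hx => two_mul_sq_le_bernoulliKL ha hx) hv
    (isEquivalent_bernoulliKL ha) u).congr' ?_
  filter_upwards [(tendsto_add_div_sqrt_div hv u).eventually_mem hIoo] with n hn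
  rw [integral_rpow_mul_rpow_one_sub_eq ha, sub_sub, rpow_mul_rpow_one_sub_eq_exp ha hn]
  have exp_entropy_ne_zero := (exp_pos (-(n * binEntropy a))).ne'
  field_simp

/-- Density version of von Mises's binomial Bernstein–von Mises theorem with
uniform prior and constant relative frequency `a`: with
`r_n = √(n/(2a(1−a)))` and `C_n = (∫₀¹ t^{an}(1−t)^{(1−a)n} dt)⁻¹`, the
rescaled posterior density `(1/r_n) C_n (a + u/r_n)^{an} (1 − a − u/r_n)^{(1−a)n}`
converges pointwise to the normal density `e^{−u²}/√π`. -/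
theorem vonMises_binomial_density (a : ℝ) (ha : a ∈ Set.Ioo (0:ℝ) 1) (u : ℝ) :
    Tendsto (fun n : ℕ =>
      (1 / Real.sqrt ((n : ℝ) / (2 * a * (1 - a)))) *
        (∫ t in (0:ℝ)..1, t ^ (a * (n : ℝ)) * (1 - t) ^ ((1 - a) * (n : ℝ)))⁻¹ *
        ((a + u / Real.sqrt ((n : ℝ) / (2 * a * (1 - a)))) ^ (a * (n : ℝ)) *
          (1 - a - u / Real.sqrt ((n : ℝ) / (2 * a * (1 - a)))) ^ ((1 - a) * (n : ℝ))))
      atTop (nhds (Real.exp (-u ^ 2) / Real.sqrt π)) :=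
  (vonMises_binomial_density_general a ha u).comp tendsto_natCast_atTop_atTop
end
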